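/- Let p ≡ −1 (mod 16) be a prime and let K = ℚ(⁴√p). Then the 2-primary part of the ideal class group of K is cyclic and the class number h_K is divisible by 4. -/

import Mathlib

open Polynomial NumberField

namespace PQ

/-- The quadratic character attached to `ℚ(√2)`, extended by `1` on `2` and `-1`. -/
noncomputable def X (n : ℤ) : ℤ := ZMod.χ₈ ((n.natAbs / 2 ^ n.natAbs.factorization 2 : ℕ) : ZMod 8)

lemma X_mul (m n : ℤ) : X (m * n) = X m * X n := by
  unfold X
  rw [Int.natAbs_mul, Nat.ordCompl_mul, Nat.cast_mul, map_mul]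

lemma X_odd {n : ℤ} (h : n % 2 = 1) : X n = ZMod.χ₈ ((n.natAbs : ℕ) : ZMod 8) := by
  unfold X
  have : n.natAbs.factorization 2 = 0 := by
    apply Nat.factorization_eq_zero_of_not_dvd; omega
  rw [this]; simp

lemma X_one_of {n : ℤ} (h : n % 8 = 1 ∨ n % 8 = 7) : X n = 1 := by
  rw [X_odd (by omega), ZMod.χ₈_nat_eq_if_mod_eight, if_neg (by omega), if_pos (by omega)]

lemma X_neg_one_of {n : ℤ} (h : n % 8 = 3 ∨ n % 8 = 5) : X n = -1 := by
  rw [X_odd (by omega), ZMod.χ₈_nat_eq_if_mod_eight, if_neg (by omega), if_neg (by omega)]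

lemma X_two : X 2 = 1 := by
  unfold X
  have : (2:ℤ).natAbs = 2 := rfl
  rw [this, Nat.Prime.factorization_self Nat.prime_two]
  simp

lemma X_neg (n : ℤ) : X (-n) = X n := by
  unfold X; simp

lemma X_one : X 1 = 1 := X_one_of (by norm_num)

lemma exists_two_pow_odd {n : ℤ} (h : n ≠ 0) : ∃ k : ℕ, ∃ m : ℤ, m % 2 = 1 ∧ n = 2 ^ k * m := by
  obtain ⟨k, m, hm, e⟩ := Nat.exists_eq_two_pow_mul_odd (n := n.natAbs) (by omega)
  rcases Int.natAbs_eq n with h1 | h1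
  · exact ⟨k, m, by obtain ⟨j, rfl⟩ := hm; omega, by rw [h1, e]; push_cast; ring⟩
  · exact ⟨k, -m, by obtain ⟨j, rfl⟩ := hm; omega, by rw [h1, e]; push_cast; ring⟩

lemma X_pow (n : ℤ) (k : ℕ) : X (n ^ k) = X n ^ k := by
  induction k with
  | zero => simp [X_one]
  | succ k ih => rw [pow_succ, X_mul, ih, pow_succ]

lemma X_sq {n : ℤ} (h : n ≠ 0) : X n * X n = 1 := by
  obtain ⟨k, m, hm, rfl⟩ := exists_two_pow_odd h
  rw [X_mul, X_pow, X_two]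
  have : m % 8 = 1 ∨ m % 8 = 7 ∨ m % 8 = 3 ∨ m % 8 = 5 := by omega
  rcases this with h | h | h | h
  · rw [X_one_of (Or.inl h)]; simp
  · rw [X_one_of (Or.inr h)]; simp
  · rw [X_neg_one_of (Or.inl h)]; simp
  · rw [X_neg_one_of (Or.inr h)]; simp

lemma X_ne_zero {n : ℤ} (h : n ≠ 0) : X n ≠ 0 := by
  intro h0; have := X_sq h; rw [h0] at this; simp at this

lemma X_sq' {n : ℤ} (h : n ≠ 0) : X (n ^ 2) = 1 := by
  rw [X_pow, pow_two, X_sq h]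

lemma X_of_primes (n : ℕ) (h0 : n ≠ 0) (h : ∀ l : ℕ, l.Prime → l ∣ n → X l = 1) : X n = 1 := by
  induction n using Nat.recOnMul with
  | zero => exact absurd rfl h0
  | one => exact X_one
  | prime q hq => exact h q hq dvd_rfl
  | mul a b ha hb =>
    have := mul_ne_zero_iff.1 h0
    push_cast
    rw [X_mul, ha this.1 fun l hl hd => h l hl (hd.mul_right _),
      hb this.2 fun l hl hd => h l hl (hd.mul_left _)]; norm_num

/-- Rational version of `X`. -/
noncomputable def XQ (q : ℚ) : ℤ := X q.num * X q.den

lemma XQ_div (a b : ℤ) (hb : b ≠ 0) : XQ (a / b) = X a * X b := by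
  have hb' : (b : ℚ) ≠ 0 := by exact_mod_cast hb
  set q : ℚ := a / b with hq
  have e : q * q.den = q.num := Rat.mul_den_eq_num q
  have e2 : (a : ℚ) * q.den = q.num * b := by
    rw [← e, hq]; field_simp
  have e3 : a * (q.den : ℤ) = q.num * b := by exact_mod_cast e2
  have e4 := congrArg X e3
  rw [X_mul, X_mul] at e4
  unfold XQ
  have h1 := X_sq (n := q.den) (by exact_mod_cast q.den_nz)
  have h2 := X_sq hb
  linear_combination (-X q.den * X b) * e4 + (X a * X b) * h1 - (X q.num * X q.den) * h2

lemma XQ_int (a : ℤ) : XQ a = X a := by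
  have := XQ_div a 1 one_ne_zero
  simpa [X_one] using this

lemma XQ_mul (a b : ℚ) : XQ (a * b) = XQ a * XQ b := by
  have e : a * b = ((a.num * b.num : ℤ) : ℚ) / ((a.den * b.den : ℤ) : ℚ) := by
    push_cast
    rw [mul_div_mul_comm, Rat.num_div_den, Rat.num_div_den]
  rw [e, XQ_div _ _ (by have := a.den_nz; have := b.den_nz; positivity), X_mul, X_mul]
  unfold XQ; ring

lemma XQ_neg (a : ℚ) : XQ (-a) = XQ a := by
  unfold XQ; simp [X_neg]

lemma XQ_abs (a : ℚ) : XQ |a| = XQ a := by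
  rcases abs_choice a with h | h <;> rw [h]; rw [XQ_neg]

lemma XQ_sq {a : ℚ} (h : a ≠ 0) : XQ a * XQ a = 1 := by
  unfold XQ
  have h1 := X_sq (n := a.den) (by exact_mod_cast a.den_nz)
  have h2 := X_sq (n := a.num) (by simpa using h)
  linear_combination h2 + (X a.num)^2 * h1

lemma XQ_pow (n : ℚ) (k : ℕ) : XQ (n ^ k) = XQ n ^ k := by
  induction k with
  | zero =>
    have := XQ_int 1
    simpa [X_one] using this
  | succ k ih => rw [pow_succ, XQ_mul, ih, pow_succ]


/-- Norm form of `ℤ[⁴√p]`. -/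
def NF {R : Type*} [CommRing R] (p a b c d : R) : R :=
  (a ^ 2 + p * c ^ 2 - 2 * p * b * d) ^ 2 - p * (2 * a * c - b ^ 2 - p * d ^ 2) ^ 2

lemma NF_odd {p a b c d : ℤ} (hp : p % 16 = 15) (h : (a + b + c + d) % 2 = 1) :
    NF p a b c d % 8 = 1 := by
  obtain ⟨k, rfl⟩ : ∃ k, p = 16 * k - 1 := ⟨(p + 1) / 16, by omega⟩
  have key : ∀ a b c d k : ZMod 8, (a+b+c+d) * 4 = 4 →
      NF (16 * k - 1) a b c d = 1 := by
    have : ∀ k : ZMod 8, 16 * k - 1 = -1 := by decide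
    simp only [this]
    intro a b c d _
    unfold NF
    revert a b c d
    decide +kernel
  have h2 := key a b c d k (by
    obtain ⟨j, hj⟩ : ∃ j, a + b + c + d = 2 * j + 1 := ⟨(a + b + c + d) / 2, by omega⟩
    have : ((a + b + c + d : ℤ) : ZMod 8) = ((2 * j + 1 : ℤ) : ZMod 8) := by rw [hj]
    push_cast at this
    rw [this]
    have h8 : (8 : ZMod 8) = 0 := by decide
    linear_combination (j : ZMod 8) * h8)
  have h3 : ((NF (16 * k - 1) a b c d : ℤ) : ZMod 8) = ((1 : ℤ) : ZMod 8) := by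
    rw [← Int.cast_one] at h2
    convert h2 using 1
    unfold NF; push_cast; ring
  have h4 := (ZMod.intCast_eq_intCast_iff' _ _ 8).1 h3
  simpa using h4

lemma X_NF {p : ℤ} (hp : p % 16 = 15) : ∀ (k : ℕ) (a b c d m : ℤ), m % 2 = 1 →
    NF p a b c d = 2 ^ k * m → X (NF p a b c d) = 1 := by
  intro k
  induction k with
  | zero =>
    intro a b c d m hm h
    apply X_one_of; left
    apply NF_odd hp
    by_contra hc
    obtain ⟨j, hj⟩ : ∃ j, a = 2 * j - b - c - d := ⟨(a + b + c + d) / 2, by omega⟩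
    obtain ⟨t, rfl⟩ : ∃ k, p = 2 * k + 1 := ⟨p / 2, by omega⟩
    have : (2 : ℤ) ∣ NF (2 * t + 1) a b c d := by
      subst hj
      unfold NF
      have e1 : ((2 * j - b - c - d) ^ 2 + (2 * t + 1) * c ^ 2 - 2 * (2 * t + 1) * b * d) =
        (b + d)^2 + 2 * (2 * j ^ 2 - 2 * j * (b + c + d) + c^2 + b * c + c * d + t * c ^ 2
          - (2*t+1)*b*d) := by ring
      have e2 : (2 * (2 * j - b - c - d) * c - b ^ 2 - (2 * t + 1) * d ^ 2) =
        (b+d)^2 + 2 * ((2 * j - b - c - d) * c - t * d^2 - b^2 - d^2 - b * d) := by ring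
      rw [e1, e2]
      generalize (2 * j ^ 2 - 2 * j * (b + c + d) + c^2 + b * c + c * d + t * c ^ 2
          - (2*t+1)*b*d) = U
      generalize ((2 * j - b - c - d) * c - t * d^2 - b^2 - d^2 - b * d) = V
      refine ⟨(b+d)^2 * 2 * U + 2 * U^2 - 2 * (b+d)^2 * V - 2 * V^2 - t * ((b+d)^2+2*V)^2, by ring⟩
    rw [h] at this
    omega
  | succ k ih =>
    intro a b c d m hm h
    have hev : (a + b + c + d) % 2 = 0 := by
      by_contra hc
      have := NF_odd hp (a := a) (b := b) (c := c) (d := d) (by omega)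
      rw [h, pow_succ] at this
      have h2 : (2 ^ k * 2 * m) = 2 * (2 ^ k * m) := by ring
      omega
    obtain ⟨t, rfl⟩ : ∃ t, p = 2 * t + 1 := ⟨p / 2, by omega⟩
    obtain ⟨j, hj⟩ : ∃ j, a = 2 * j - b - c - d := ⟨(a + b + c + d) / 2, by omega⟩
    obtain ⟨a', ha'⟩ : ∃ a', 2 * a' = a - (2*t+1) * b + (2*t+1) * c - (2*t+1) * d :=
      ⟨j - b - d - t * b + t * c - t * d, by rw [hj]; ring⟩
    obtain ⟨b', hb'⟩ : ∃ b', 2 * b' = -a + b - (2*t+1) * c + (2*t+1) * d :=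
      ⟨-j + b + d - t * c + t * d, by rw [hj]; ring⟩
    obtain ⟨c', hc'⟩ : ∃ a', 2 * a' = a - b + c - (2*t+1) * d :=
      ⟨j - b - d - t * d, by rw [hj]; ring⟩
    obtain ⟨d', hd'⟩ : ∃ b', 2 * b' = -a + b - c + d :=
      ⟨-j + b + d, by rw [hj]; ring⟩
    have e : 2 * NF (2*t+1) a' b' c' d' = NF (2*t+1) a b c d * (-t) ^ 3 := by
      have e1 : 16 * NF (2*t+1) a' b' c' d' = NF (2*t+1) (2*a') (2*b') (2*c') (2*d') := by
        unfold NF; ring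
      have e2 : NF (2*t+1) (2*a') (2*b') (2*c') (2*d') = NF (2*t+1) a b c d * (8 * (-t) ^ 3) := by
        rw [ha', hb', hc', hd']; unfold NF; ring
      linarith
    have e' : NF (2*t+1) a' b' c' d' = 2 ^ k * (m * (-t)^3) := by
      rw [h, pow_succ] at e
      linarith
    have ho : (m * (-t)^3) % 2 = 1 := by
      apply Int.odd_iff.1
      apply Int.odd_mul.2 ⟨Int.odd_iff.2 hm, Odd.pow _⟩
      exact Int.odd_iff.2 (by omega)
    have h1 := ih a' b' c' d' _ ho e'
    have h2 := congrArg X e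
    rw [X_mul, X_two, h1, X_mul, X_pow, X_one_of (n := -t) (by omega)] at h2
    linarith

lemma X_NF' {p : ℤ} (hp : p % 16 = 15) {a b c d : ℤ} (h : NF p a b c d ≠ 0) :
    X (NF p a b c d) = 1 := by
  obtain ⟨k, m, hm, e⟩ := exists_two_pow_odd h
  exact X_NF hp k a b c d m hm e

lemma XQ_NF {p : ℤ} (hp : p % 16 = 15) {a b c d : ℚ} (h : NF (p : ℚ) a b c d ≠ 0) :
    XQ (NF (p : ℚ) a b c d) = 1 := by
  have H : ∃ D : ℤ, D ≠ 0 ∧ ∃ a' b' c' d' : ℤ, a * D = a' ∧ b * D = b' ∧ c * D = c' ∧ d * D = d' := by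
    refine ⟨a.den * b.den * c.den * d.den, by simp,
      a.num * b.den * c.den * d.den, b.num * a.den * c.den * d.den,
      c.num * a.den * b.den * d.den, d.num * a.den * b.den * c.den, ?_, ?_, ?_, ?_⟩
    · push_cast; rw [← Rat.mul_den_eq_num a]; ring
    · push_cast; rw [← Rat.mul_den_eq_num b]; ring
    · push_cast; rw [← Rat.mul_den_eq_num c]; ring
    · push_cast; rw [← Rat.mul_den_eq_num d]; ring
  obtain ⟨D, hD, a', b', c', d', ha, hb, hc, hd⟩ := H
  have hD' : (D : ℚ) ≠ 0 := by exact_mod_cast hD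
  have e : NF (p : ℚ) a b c d * (D ^ 2 * D ^ 2) = ((NF p a' b' c' d' : ℤ) : ℚ) := by
    unfold NF; push_cast; rw [← ha, ← hb, ← hc, ← hd]; ring
  have h' : NF p a' b' c' d' ≠ 0 := by
    intro h0
    rw [h0] at e
    simp [hD', h] at e
  have := congrArg XQ e
  rw [XQ_int, X_NF' hp h', XQ_mul, XQ_mul] at this
  have h3 := XQ_sq (a := (D:ℚ)^2) (by positivity)
  rw [h3] at this
  linarith


lemma odd_sq_mod {c : ℤ} (h : c % 2 = 1) :
    ((c % 8 = 1 ∨ c % 8 = 7) ∧ c ^ 2 % 16 = 1) ∨ ((c % 8 = 3 ∨ c % 8 = 5) ∧ c ^ 2 % 16 = 9) := by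
  obtain ⟨j, hj⟩ : ∃ j, c = 8 * j + c % 8 := ⟨c / 8, by omega⟩
  have : c % 8 = 1 ∨ c % 8 = 7 ∨ c % 8 = 3 ∨ c % 8 = 5 := by omega
  rcases this with h | h | h | h <;> rw [h] at hj <;> subst hj <;> ring_nf <;> omega

lemma odd_mul_mod {c d : ℤ} (h : c % 2 = 1) (h' : d % 2 = 1) :
    ((c * d % 8 = 1 ∨ c * d % 8 = 7) ∧ (c ^ 2 - d ^ 2) % 16 = 0) ∨
    ((c * d % 8 = 3 ∨ c * d % 8 = 5) ∧ (c ^ 2 - d ^ 2) % 16 = 8) := by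
  have h1 := Int.mul_emod c d 8
  rcases odd_sq_mod h with ⟨a | a, b⟩ | ⟨a | a, b⟩ <;>
  rcases odd_sq_mod h' with ⟨a' | a', b'⟩ | ⟨a' | a', b'⟩ <;>
  · rw [a, a'] at h1
    norm_num at h1
    omega

lemma claim2_aux (p a b c d e f : ℤ) (hp : p % 16 = 15)
    (h1 : a^2 + p * b^2 - 2 * p * c * d = 2 * (e^2 + p * f^2))
    (h2 : 2 * a * b - c^2 - p * d^2 = 4 * e * f) (ho : (e + f) % 2 = 1) :
    X (e^2 - p * f^2) = X (c^2 - p * d^2) := by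
  obtain ⟨k, rfl⟩ : ∃ k, p = 16 * k - 1 := ⟨(p + 1) / 16, by omega⟩
  have E1 : a^2 - b^2 + 2 * (c * d) - 2 * (e^2 - f^2) =
    16 * (k * (2 * f^2 + 2 * c * d - b^2)) := by linear_combination h1
  have E2 : 2 * (a * b) - c^2 + d^2 - 4 * (e * f) = 16 * (k * d^2) := by linear_combination h2
  have G1 : e^2 - (16 * k - 1) * f^2 = e^2 + f^2 - 16 * (k * f^2) := by ring
  have G2 : c^2 - (16 * k - 1) * d^2 = c^2 + d^2 - 16 * (k * d^2) := by ring
  rw [G1, G2]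
  generalize k * (2 * f^2 + 2 * c * d - b^2) = u at *
  generalize k * d^2 = w at *
  generalize k * f^2 = z at *
  have par : ∀ x : ℤ, (x % 2 = 0 ∧ x ^ 2 % 4 = 0) ∨ (x % 2 = 1 ∧ x ^ 2 % 8 = 1) := by
    intro x
    rcases Int.emod_two_eq_zero_or_one x with h | h
    · left; obtain ⟨y, rfl⟩ : ∃ y, x = 2 * y := ⟨x / 2, by omega⟩
      refine ⟨h, by ring_nf; omega⟩
    · right; have := odd_sq_mod h; refine ⟨h, by omega⟩
  have pm : ∀ x y : ℤ, (x % 2 = 1 → y % 2 = 1 → x * y % 2 = 1) := by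
    intro x y hx hy
    rw [Int.mul_emod, hx, hy]; norm_num
  have hcd : c % 2 = d % 2 := by
    rcases par c with h | h <;> rcases par d with h' | h' <;> omega
  have hab : a % 2 = b % 2 := by
    rcases par a with h | h <;> rcases par b with h' | h' <;> omega
  have hef : e * f % 2 = 0 := by
    rw [Int.mul_emod]
    rcases Int.emod_two_eq_zero_or_one e with h | h
    · rw [h]; simp
    · have : f % 2 = 0 := by omega
      rw [this]; simp
  have hab0 : a % 2 = 0 ∧ b % 2 = 0 := by
    by_contra hc
    have h3 := pm a b (by omega) (by omega)
    rcases par c with h | h <;> rcases par d with h' | h' <;> omega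
  obtain ⟨A, rfl⟩ : ∃ A, a = 2 * A := ⟨a / 2, by omega⟩
  obtain ⟨B, rfl⟩ : ∃ A, b = 2 * A := ⟨b / 2, by omega⟩
  have hefsq : (e ^ 2 - f ^ 2) % 2 = 1 := by
    rcases par e with h | h <;> rcases par f with h' | h' <;> omega
  have hc : c % 2 = 1 := by
    by_contra hc
    obtain ⟨C, rfl⟩ : ∃ A, c = 2 * A := ⟨c / 2, by omega⟩
    obtain ⟨D, rfl⟩ : ∃ A, d = 2 * A := ⟨d / 2, by omega⟩
    have : (2 * A)^2 - (2 * B)^2 + 2 * ((2 * C) * (2 * D)) = 4 * (A^2 - B^2 + 2 * (C * D)) := by ring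
    omega
  have hd : d % 2 = 1 := by omega
  have E1' : 2 * (A^2 - B^2) + c * d - (e^2 - f^2) = 8 * u := by linarith
  have E2' : 8 * (A * B) - (c^2 - d^2) - 4 * (e * f) = 16 * w := by linarith
  -- the value of `N(g)` mod 8 together with `e f` mod 4 and `e² - f²` mod 8
  have hg : (e * f % 4 = 0 ∧ (e^2+f^2) % 8 = 1 ∧ ((e^2-f^2) % 8 = 1 ∨ (e^2-f^2) % 8 = 7)) ∨
      (e * f % 4 = 2 ∧ (e^2+f^2) % 8 = 5 ∧ ((e^2-f^2) % 8 = 3 ∨ (e^2-f^2) % 8 = 5)) := by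
    have H : ∀ x y : ℤ, x % 2 = 1 → y % 2 = 0 → 
      (x * y % 4 = 0 ∧ y^2 % 8 = 0 ∧ x ^ 2 % 8 = 1) ∨ (x * y % 4 = 2 ∧ y^2 % 8 = 4 ∧ x^2 % 8 = 1) := by
      intro x y hx hy
      have h1 : x ^ 2 % 8 = 1 := by have := odd_sq_mod hx; omega
      have h2 : y % 4 = 0 ∨ y % 4 = 2 := by omega
      rcases h2 with h2 | h2
      · left
        obtain ⟨j, rfl⟩ : ∃ j, y = 4 * j := ⟨y / 4, by omega⟩
        refine ⟨?_, by ring_nf; omega, h1⟩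
        have : x * (4 * j) = 4 * (x * j) := by ring
        omega
      · right
        obtain ⟨j, rfl⟩ : ∃ j, y = 4 * j + 2 := ⟨y / 4, by omega⟩
        refine ⟨?_, by ring_nf; omega, h1⟩
        have : x * (4 * j + 2) = 4 * (x * j) + 2 * x := by ring
        omega
    rcases Int.emod_two_eq_zero_or_one e with h | h
    · have := H f e (by omega) h
      rw [mul_comm f e] at this
      omega
    · have := H e f h (by omega)
      omega
  have hAB : A * B % 2 = 0 := by
    by_contra hc'
    have hA : A % 2 = 1 := by
      by_contra h
      apply hc'
      rw [Int.mul_emod, show A % 2 = 0 by omega]; simp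
    have hB : B % 2 = 1 := by
      by_contra h
      apply hc'
      rw [Int.mul_emod, show B % 2 = 0 by omega]; simp
    have h3 := odd_mul_mod hc hd
    have h4 := odd_sq_mod hA
    have h5 := odd_sq_mod hB
    omega
  have hM : ∃ M, c^2 + d^2 - 16 * w = 2 * M := ⟨(c^2 + d^2 - 16 * w) / 2, by
    have := odd_sq_mod hc; have := odd_sq_mod hd; omega⟩
  obtain ⟨M, hM⟩ := hM
  rw [hM, X_mul, X_two, one_mul]
  have h6 := odd_sq_mod hc
  have h7 := odd_sq_mod hd
  rcases hg with ⟨g1, g2, g3⟩ | ⟨g1, g2, g3⟩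
  · rw [X_one_of (by omega), X_one_of (by omega)]
  · rw [X_neg_one_of (by omega), X_neg_one_of (by omega)]

lemma sq_par (x : ℤ) : (x % 2 = 0 ∧ x ^ 2 % 4 = 0) ∨ (x % 2 = 1 ∧ x ^ 2 % 4 = 1) := by
  rcases Int.emod_two_eq_zero_or_one x with h | h
  · left; obtain ⟨y, rfl⟩ : ∃ y, x = 2 * y := ⟨x / 2, by omega⟩
    refine ⟨h, by ring_nf; omega⟩
  · right; have := odd_sq_mod h; refine ⟨h, by omega⟩

lemma claim2 {p : ℤ} (hp : p % 16 = 15) : ∀ (k : ℕ) (a b c d e f m : ℤ), m % 2 = 1 →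
    e^2 - p * f^2 = 2 ^ k * m →
    a^2 + p * b^2 - 2 * p * c * d = 2 * (e^2 + p * f^2) →
    2 * a * b - c^2 - p * d^2 = 4 * e * f →
    X (e^2 - p * f^2) = X (c^2 - p * d^2) := by
  obtain ⟨t, rfl⟩ : ∃ k, p = 2 * k + 1 := ⟨p / 2, by omega⟩
  intro k
  induction k with
  | zero =>
    intro a b c d e f m hm h h1 h2
    refine claim2_aux _ a b c d e f hp h1 h2 ?_
    have : e^2 - (2 * t + 1) * f ^ 2 = e ^ 2 - f ^ 2 - 2 * (t * f ^ 2) := by ring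
    rcases sq_par e with h | h <;> rcases sq_par f with h' | h' <;> omega
  | succ k ih =>
    intro a b c d e f m hm h h1 h2
    have hef : e % 2 = f % 2 := by
      have : e^2 - (2 * t + 1) * f ^ 2 = e ^ 2 - f ^ 2 - 2 * (t * f ^ 2) := by ring
      have h3 : 2 ^ (k+1) * m = 2 * (2 ^ k * m) := by ring
      rcases sq_par e with h | h <;> rcases sq_par f with h' | h' <;> omega
    have hcd : c % 2 = d % 2 := by
      have h3 : 2 * (a * b) - c^2 - d ^ 2 - 2 * (t * d ^ 2)  = 4 * (e * f) := by linear_combination h2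
      rcases sq_par c with h | h <;> rcases sq_par d with h' | h' <;> omega
    have hab : a % 2 = b % 2 := by
      have h3 : a^2 + b^2 + 2 * (t * b^2) - 2 * ((2 * t + 1) * c * d) = 2 * (e^2 + (2 * t+1) * f^2) := by
        linear_combination h1
      rcases sq_par a with h | h <;> rcases sq_par b with h' | h' <;> omega
    have st : ∀ x y : ℤ, x % 2 = y % 2 → ∃ x' y' : ℤ, 2 * x' = x - (2 * t + 1) * y ∧ 2 * y' = y - x := by
      intro x y hxy
      obtain ⟨j, rfl⟩ : ∃ j, x = y + 2 * j := ⟨(x - y) / 2, by omega⟩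
      exact ⟨j - t * y, -j, by ring, by ring⟩
    obtain ⟨a', b', ha, hb⟩ := st a b hab
    obtain ⟨c', d', hc, hd⟩ := st c d hcd
    obtain ⟨e', f', he, hf⟩ := st e f hef
    have N1 : 2 * (e'^2 - (2*t+1) * f'^2) = (e^2 - (2*t+1)*f^2) * (-t) := by
      have : (2 * e')^2 - (2*t+1) * (2 * f')^2 = (e^2 - (2*t+1)*f^2) * (-(2*t)) := by
        rw [he, hf]; ring
      linarith
    have N2 : 2 * (c'^2 - (2*t+1) * d'^2) = (c^2 - (2*t+1)*d^2) * (-t) := by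
      have : (2 * c')^2 - (2*t+1) * (2 * d')^2 = (c^2 - (2*t+1)*d^2) * (-(2*t)) := by
        rw [hc, hd]; ring
      linarith
    have R1 : a'^2 + (2*t+1) * b'^2 - 2 * (2*t+1) * c' * d' = 2 * (e'^2 + (2*t+1) * f'^2) := by
      have : (2*a')^2 + (2*t+1) * (2*b')^2 - 2 * (2*t+1) * (2*c') * (2*d') =
          2 * ((2*e')^2 + (2*t+1) * (2*f')^2) := by
        rw [ha, hb, hc, hd, he, hf]
        linear_combination (1 + (2*t+1)) * h1 + (-2) * (2*t+1) * h2
      linarith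
    have R2 : 2 * a' * b' - c'^2 - (2*t+1) * d'^2 = 4 * e' * f' := by
      have : 2 * (2*a') * (2*b') - (2*c')^2 - (2*t+1) * (2*d')^2 =
          4 * (2*e') * (2*f') := by
        rw [ha, hb, hc, hd, he, hf]
        linear_combination (-2) * h1 + (1 + (2*t+1)) * h2
      linarith
    have hm' : m * (-t) % 2 = 1 := by
      apply Int.odd_iff.1
      apply Int.odd_mul.2 ⟨Int.odd_iff.2 hm, Int.odd_iff.2 (by omega)⟩
    have h3 := ih a' b' c' d' e' f' (m * (-t)) hm' (by
      rw [h, pow_succ 2 k] at N1; linarith) R1 R2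
    have Xt : X (-t) = 1 := X_one_of (by omega)
    have N1' := congrArg X N1
    have N2' := congrArg X N2
    rw [X_mul, X_two, X_mul, Xt] at N1' N2'
    linarith

/-- Claim 1. -/
lemma claim1 {p : ℕ} (hpp : p.Prime) (hp : p % 16 = 15) (a b c d e f x y x' y' : ℤ) (i j : ℕ)
    (h1 : a^2 + p * b^2 - 2 * p * c * d = 2 * (e^2 + p * f^2))
    (h2 : 2 * a * b - c^2 - p * d^2 = 4 * e * f)
    (h3 : x * a + p * y * b + x' * c + p * y' * d = 2 ^ i * p ^ j)
    (h4 : x * b + y * a + x' * d + y' * c = 0)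
    (hne : c^2 - p * d^2 ≠ 0) :
    X (c^2 - p * d^2) = 1 := by
  obtain ⟨m, hm⟩ : ∃ m : ℤ, m = ((Int.gcd c d : ℕ) : ℤ) := ⟨_, rfl⟩
  have hcd : ¬ (c = 0 ∧ d = 0) := by
    rintro ⟨rfl, rfl⟩; simp at hne
  have hm0 : m ≠ 0 := by
    rw [hm]; simpa [Int.gcd_eq_zero_iff] using hcd
  obtain ⟨c', d', hco, hc, hd⟩ := Int.exists_gcd_one (m := c) (n := d) (by
    rw [Nat.pos_iff_ne_zero]; simpa [Int.gcd_eq_zero_iff] using hcd)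
  rw [← hm] at hc hd
  have e1 : c^2 - p * d^2 = m^2 * (c'^2 - p * d'^2) := by rw [hc, hd]; ring
  rw [e1, X_mul, X_sq' hm0, one_mul]
  have hne' : c'^2 - p * d'^2 ≠ 0 := by
    intro h0; rw [e1, h0] at hne; simp at hne
  have key : X ((c'^2 - p * d'^2).natAbs : ℤ) = 1 := by
    apply X_of_primes
    · simpa using hne'
    intro l hl hdvd
    by_cases hl2 : l = 2
    · subst hl2; exact X_two
    by_cases hlp : l = p
    · subst hlp; exact X_one_of (by omega)
    have := Fact.mk hl
    have hdvd' : (l : ℤ) ∣ c'^2 - p * d'^2 := Int.natCast_dvd.2 hdvd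
    have hz : ((c'^2 - p * d'^2 : ℤ) : ZMod l) = 0 := (ZMod.intCast_zmod_eq_zero_iff_dvd _ _).2 hdvd'
    push_cast at hz
    have hd0 : (d' : ZMod l) ≠ 0 := by
      intro hd0
      rw [hd0] at hz
      have hc0 : (c' : ZMod l) = 0 := by simpa using hz
      have := Int.dvd_gcd ((ZMod.intCast_zmod_eq_zero_iff_dvd _ _).1 hc0) ((ZMod.intCast_zmod_eq_zero_iff_dvd _ _).1 hd0)
      rw [hco] at this
      exact hl.one_lt.ne' (Nat.dvd_one.1 (by exact_mod_cast this))
    obtain ⟨s, hs⟩ : ∃ s : ZMod l, (c' : ZMod l) = - s * d' := ⟨-(c' / d'), by field_simp⟩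
    have hs2 : s ^ 2 = p := by
      rw [hs] at hz
      have : (s^2 - p) * (d' : ZMod l)^2 = 0 := by linear_combination hz
      rcases mul_eq_zero.1 this with h | h
      · exact sub_eq_zero.1 h
      · exact absurd (pow_eq_zero_iff two_ne_zero |>.1 h) hd0
    have C1 := congrArg (Int.cast : ℤ → ZMod l) h1
    have C2 := congrArg (Int.cast : ℤ → ZMod l) h2
    have C3 := congrArg (Int.cast : ℤ → ZMod l) h3
    have C4 := congrArg (Int.cast : ℤ → ZMod l) h4
    have D1 := congrArg (Int.cast : ℤ → ZMod l) hc
    have D2 := congrArg (Int.cast : ℤ → ZMod l) hd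
    push_cast at C1 C2 C3 C4 D1 D2
    have hv : (c : ZMod l) = - s * d := by rw [D1, D2, hs]; ring
    rw [hv, ← hs2] at C1 C2 C3
    rw [hv] at C4
    have hsq : ((a : ZMod l) + s * b)^2 = 2 * (e + s * f)^2 := by linear_combination C1 + s * C2
    have hun : ((x : ZMod l) + s * y) * (a + s * b) = 2 ^ i * (s^2)^j := by
      linear_combination C3 + s * C4
    have hsne : s ^ 2 ≠ 0 := by
      rw [hs2]
      intro h0
      have := (ZMod.natCast_eq_zero_iff _ _).1 h0
      exact hlp ((Nat.prime_dvd_prime_iff_eq hl hpp).1 this)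
    have h20 : (2 : ZMod l) ≠ 0 := by
      intro h0
      have : ((2 : ℕ) : ZMod l) = 0 := by exact_mod_cast h0
      have := (ZMod.natCast_eq_zero_iff _ _).1 this
      exact hl2 ((Nat.prime_dvd_prime_iff_eq hl Nat.prime_two).1 this)
    have hu0 : (a : ZMod l) + s * b ≠ 0 := by
      intro h0
      rw [h0, mul_zero] at hun
      have : (2 : ZMod l) ^ i * (s^2)^j ≠ 0 := mul_ne_zero (pow_ne_zero _ h20) (pow_ne_zero _ hsne)
      exact this hun.symm
    have hg0 : (e : ZMod l) + s * f ≠ 0 := by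
      intro h0
      rw [h0] at hsq
      simp at hsq
      exact hu0 hsq
    have : IsSquare (2 : ZMod l) := by
      refine ⟨((a : ZMod l) + s * b) / (e + s * f), ?_⟩
      rw [← pow_two, div_pow, hsq]
      field_simp
    have := (ZMod.exists_sq_eq_two_iff hl2).1 this
    exact X_one_of (by omega)
  rcases Int.natAbs_eq (c'^2 - p * d'^2) with h | h
  · rw [h]; exact key
  · rw [h, X_neg]; exact key

/-- `-1` and `-2` are not norms from `ℚ(√p)` up to squares. -/
lemma no_neg_norm {p : ℕ} (hpp : p.Prime) (hp : p % 16 = 15) (r : ℤ) (hr : r = 1 ∨ r = 2) :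
    ∀ (N : ℕ) (a b n : ℤ), n.natAbs ≤ N → a^2 - p * b^2 = - r * n^2 → n = 0 := by
  have := Fact.mk hpp
  have hres : ∀ a n : ZMod p, a^2 = - r * n^2 → n = 0 := by
    intro a n h
    by_contra hn
    have hsq : IsSquare (-(r : ZMod p)) := ⟨a / n, by
      field_simp; rw [h]; ring⟩
    have h2 : IsSquare (r : ZMod p) := by
      rcases hr with rfl | rfl
      · simp
      · have := (ZMod.exists_sq_eq_two_iff (p := p) (by omega)).2 (by omega)
        exact_mod_cast this
    have hr0 : (r : ZMod p) ≠ 0 := by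
      intro h0
      have := (ZMod.intCast_zmod_eq_zero_iff_dvd _ _).1 h0
      have := Int.le_of_dvd (by omega) this
      omega
    have h3 : IsSquare (-1 : ZMod p) := by
      have := hsq.div h2
      rwa [neg_div, div_self hr0] at this
    exact ZMod.mod_four_ne_three_of_sq_eq_neg_one (y := h3.choose) (by
      rw [pow_two]; exact h3.choose_spec.symm) (by omega)
  intro N
  induction N with
  | zero => intro a b n hn _; omega
  | succ N ih =>
    intro a b n hn h
    by_contra h0
    have hC := congrArg (Int.cast : ℤ → ZMod p) h
    push_cast at hC
    simp only [CharP.cast_eq_zero, zero_mul, sub_zero] at hC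
    have hn0 := hres _ _ hC
    rw [hn0] at hC
    have ha0 : (a : ZMod p) = 0 := by simpa using hC
    obtain ⟨n', rfl⟩ := (ZMod.intCast_zmod_eq_zero_iff_dvd _ _).1 hn0
    obtain ⟨a', rfl⟩ := (ZMod.intCast_zmod_eq_zero_iff_dvd _ _).1 ha0
    have hp0 : (p : ℤ) ≠ 0 := by exact_mod_cast hpp.ne_zero
    have h5 : b^2 = p * (a'^2 + r * n'^2) := by
      apply mul_left_cancel₀ hp0
      linear_combination - h
    have hpb : (p : ℤ) ∣ b := (Nat.prime_iff_prime_int.1 hpp).dvd_of_dvd_pow ⟨_, h5⟩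
    obtain ⟨b', rfl⟩ := hpb
    have h6 : a'^2 - p * b'^2 = - r * n'^2 := by
      apply mul_left_cancel₀ hp0
      linear_combination - h5
    have h7 := ih a' b' n' (by
      rw [Int.natAbs_mul] at hn
      have : 0 < n'.natAbs := by
        rcases Nat.eq_zero_or_pos n'.natAbs with h | h
        · simp at h; simp [h] at h0
        · exact h
      simp only [Int.natAbs_natCast] at hn
      have hp2 := hpp.two_le
      nlinarith) h6
    simp [h7] at h0

lemma no_neg_normQ {p : ℕ} (hpp : p.Prime) (hp : p % 16 = 15) (r : ℤ) (hr : r = 1 ∨ r = 2)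
    (a b n : ℚ) (h : a^2 - p * b^2 = - r * n^2) : n = 0 := by
  have e := no_neg_norm hpp hp r hr _ (a.num * b.den * n.den) (b.num * a.den * n.den)
    (n.num * a.den * b.den) le_rfl (by
      rw [← Rat.num_div_den a, ← Rat.num_div_den b, ← Rat.num_div_den n] at h
      have h1 : (a.den : ℚ) ≠ 0 := by exact_mod_cast a.den_nz
      have h2 : (b.den : ℚ) ≠ 0 := by exact_mod_cast b.den_nz
      have h3 : (n.den : ℚ) ≠ 0 := by exact_mod_cast n.den_nz
      field_simp at h
      have : (((a.num * b.den * n.den)^2 - p * (b.num * a.den * n.den)^2 : ℤ) : ℚ) =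
        ((-r * (n.num * a.den * b.den)^2 : ℤ) : ℚ) := by
        push_cast
        linear_combination h
      exact_mod_cast this)
  simpa using e

end PQ



namespace PQ

/-- The data describing `K = ℚ(⁴√p)`. -/
structure Setup (p : ℕ) (K : Type*) [Field K] [NumberField K] where
  hp : p.Prime
  hmod : p % 16 = 15
  θ : K
  hθ : θ ^ 4 = p
  bas : Module.Basis (Fin 4) ℚ K
  hbas : ∀ i, bas i = θ ^ (i : ℕ)
  σ : K ≃ₐ[ℚ] K
  hσ : σ θ = -θ
  φ : K →+* ℝ

namespace Setup

variable {p : ℕ} {K : Type*} [Field K] [NumberField K] (S : Setup p K)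

/-- Element with the given coordinates. -/
def el (a b c d : ℚ) : K := a + b * S.θ + c * S.θ ^ 2 + d * S.θ ^ 3

lemma el_eq (a b c d : ℚ) : S.el a b c d = S.bas.equivFun.symm ![a, b, c, d] := by
  rw [Module.Basis.equivFun_symm_apply]
  simp [Fin.sum_univ_four, S.hbas, el, Algebra.smul_def]

lemma repr_el (a b c d : ℚ) (i : Fin 4) : S.bas.repr (S.el a b c d) i = ![a, b, c, d] i := by
  rw [el_eq, ← Module.Basis.equivFun_apply, LinearEquiv.apply_symm_apply]

lemma exists_el (x : K) : ∃ a b c d, x = S.el a b c d := by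
  refine ⟨S.bas.repr x 0, S.bas.repr x 1, S.bas.repr x 2, S.bas.repr x 3, ?_⟩
  rw [el_eq]
  rw [LinearEquiv.eq_symm_apply]
  ext i
  fin_cases i <;> rfl

lemma el_inj {a b c d a' b' c' d' : ℚ} (h : S.el a b c d = S.el a' b' c' d') :
    a = a' ∧ b = b' ∧ c = c' ∧ d = d' := by
  have := fun i => S.repr_el a b c d i
  rw [h] at this
  have h2 := fun i => (S.repr_el a' b' c' d' i).symm.trans (this i)
  exact ⟨(h2 0).symm, (h2 1).symm, (h2 2).symm, (h2 3).symm⟩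

lemma el_mul (a b c d a' b' c' d' : ℚ) : S.el a b c d * S.el a' b' c' d' =
    S.el (a * a' + p * (b * d' + c * c' + d * b')) (a * b' + b * a' + p * (c * d' + d * c'))
      (a * c' + b * b' + c * a' + p * d * d') (a * d' + b * c' + c * b' + d * a') := by
  unfold el
  push_cast
  have h := S.hθ
  rw [← h]
  ring

lemma el_add (a b c d a' b' c' d' : ℚ) : S.el a b c d + S.el a' b' c' d' =
    S.el (a + a') (b + b') (c + c') (d + d') := by
  unfold el
  push_cast
  ring

lemma el_sub (a b c d a' b' c' d' : ℚ) : S.el a b c d - S.el a' b' c' d' =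
    S.el (a - a') (b - b') (c - c') (d - d') := by
  unfold el
  push_cast
  ring

lemma el_rat (a : ℚ) : S.el a 0 0 0 = a := by simp [el]
lemma el_θ : S.el 0 1 0 0 = S.θ := by simp [el]
lemma el_zero : S.el 0 0 0 0 = 0 := by simp [el]

lemma σ_el (a b c d : ℚ) : S.σ (S.el a b c d) = S.el a (-b) c (-d) := by
  unfold el
  simp [S.hσ]
  ring

lemma σσ (x : K) : S.σ (S.σ x) = x := by
  obtain ⟨a, b, c, d, rfl⟩ := S.exists_el x
  simp [σ_el]

lemma mat_el (a b c d : ℚ) : Algebra.leftMulMatrix S.bas (S.el a b c d) =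
    !![a, p * d, p * c, p * b; b, a, p * d, p * c; c, b, a, p * d; d, c, b, a] := by
  have h0 : S.bas 0 = S.el 1 0 0 0 := by rw [S.hbas]; simp [el]
  have h1 : S.bas 1 = S.el 0 1 0 0 := by rw [S.hbas]; simp [el]
  have h2 : S.bas 2 = S.el 0 0 1 0 := by rw [S.hbas]; simp [el]
  have h3 : S.bas 3 = S.el 0 0 0 1 := by rw [S.hbas]; simp [el]
  ext i j
  rw [Algebra.leftMulMatrix_eq_repr_mul]
  fin_cases j
  · simp only [Fin.zero_eta, h0, el_mul, repr_el]; fin_cases i <;> simp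
  · simp only [Fin.mk_one, h1, el_mul, repr_el]; fin_cases i <;> simp
  · simp only [Fin.reduceFinMk, h2, el_mul, repr_el]; fin_cases i <;> simp
  · simp only [Fin.reduceFinMk, h3, el_mul, repr_el]; fin_cases i <;> simp

lemma norm_el (a b c d : ℚ) : Algebra.norm ℚ (S.el a b c d) = NF (p : ℚ) a b c d := by
  rw [Algebra.norm_eq_matrix_det S.bas, mat_el]
  simp [Matrix.det_succ_row_zero, Fin.sum_univ_succ, Fin.succAbove, NF]
  ring

lemma trace_el (a b c d : ℚ) : Algebra.trace ℚ K (S.el a b c d) = 4 * a := by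
  rw [Algebra.trace_eq_matrix_trace S.bas, mat_el]
  simp [Matrix.trace, Fin.sum_univ_four]
  ring

lemma finrank_eq (S : Setup p K) : Module.finrank ℚ K = 4 := by
  rw [Module.finrank_eq_card_basis S.bas]; simp

lemma int_trace (x : K) (hx : IsIntegral ℤ x) : ∃ n : ℤ, Algebra.trace ℚ K x = n := by
  have := Algebra.isIntegral_trace (L := ℚ) hx
  obtain ⟨n, hn⟩ := IsIntegrallyClosed.isIntegral_iff.1 this
  exact ⟨n, by rw [← hn]; simp⟩

lemma θ_int : IsIntegral ℤ S.θ := by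
  refine IsIntegral.of_pow (n := 4) (by norm_num) ?_
  rw [S.hθ]
  exact map_natCast (algebraMap ℤ K) p ▸ isIntegral_algebraMap

lemma σ_int {x : K} (h : IsIntegral ℤ x) : IsIntegral ℤ (S.σ x) :=
  h.map (S.σ.toAlgHom.restrictScalars ℤ)

lemma el_int (a b c d : ℤ) : IsIntegral ℤ (S.el a b c d) := by
  unfold el
  have h := S.θ_int
  have hi : ∀ n : ℤ, IsIntegral ℤ (((n : ℚ)) : K) := fun n => by
    rw [Rat.cast_intCast]; exact eq_intCast (algebraMap ℤ K) n ▸ isIntegral_algebraMap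
  exact (((hi a).add ((hi b).mul h)).add ((hi c).mul (h.pow 2))).add ((hi d).mul (h.pow 3))

/-- Integral elements have coordinates in `(4 * p)⁻¹ ℤ`. -/
lemma int_coords {x : K} (hx : IsIntegral ℤ x) : ∃ a b c d : ℤ, 4 * p * x = S.el a b c d := by
  obtain ⟨a, b, c, d, rfl⟩ := S.exists_el x
  have hθ := S.θ_int
  obtain ⟨n0, h0⟩ := int_trace _ hx
  obtain ⟨n1, h1⟩ := int_trace _ (hx.mul (hθ.pow 3))
  obtain ⟨n2, h2⟩ := int_trace _ (hx.mul (hθ.pow 2))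
  obtain ⟨n3, h3⟩ := int_trace _ (hx.mul hθ)
  have e3 : S.θ ^ 3 = S.el 0 0 0 1 := by simp [el]
  have e2 : S.θ ^ 2 = S.el 0 0 1 0 := by simp [el]
  rw [e3, el_mul, trace_el] at h1
  rw [e2, el_mul, trace_el] at h2
  rw [← S.el_θ, el_mul, trace_el] at h3
  rw [trace_el] at h0
  refine ⟨n0 * p, n1, n2, n3, ?_⟩
  have : (4 * p : K) = S.el (4 * p) 0 0 0 := by rw [el_rat]; push_cast; ring
  rw [this, el_mul]
  push_cast
  rw [← h0, ← h1, ← h2, ← h3]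
  congr 1 <;> ring

lemma p_ne (S : Setup p K) : (p : ℚ) ≠ 0 := by exact_mod_cast S.hp.ne_zero

lemma hmodZ (S : Setup p K) : (p : ℤ) % 16 = 15 := by have := S.hmod; omega

lemma XQ_norm (S : Setup p K) {x : K} (hx : x ≠ 0) : XQ (Algebra.norm ℚ x) = 1 := by
  obtain ⟨a, b, c, d, rfl⟩ := S.exists_el x
  have h : Algebra.norm ℚ (S.el a b c d) ≠ 0 := by
    rwa [Ne, Algebra.norm_eq_zero_iff]
  rw [norm_el] at h ⊢
  exact XQ_NF (p := (p : ℤ)) S.hmodZ h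

/-- Elements of the subfield `ℚ(√p)`. -/
def fl (a c : ℚ) : K := S.el a 0 c 0

lemma fl_mul (a c a' c' : ℚ) : S.fl a c * S.fl a' c' = S.fl (a * a' + p * c * c') (a * c' + c * a') := by
  unfold fl; rw [el_mul]; congr 1 <;> ring

lemma fl_add (a c a' c' : ℚ) : S.fl a c + S.fl a' c' = S.fl (a + a') (c + c') := by
  unfold fl; rw [el_add]; congr 1 <;> ring

lemma fl_rat (a : ℚ) : S.fl a 0 = a := S.el_rat a

lemma fl_zero : S.fl 0 0 = 0 := S.el_zero

lemma fl_inj {a c a' c' : ℚ} (h : S.fl a c = S.fl a' c') : a = a' ∧ c = c' := by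
  have := S.el_inj h; exact ⟨this.1, this.2.2.1⟩

lemma fl_sq (a c : ℚ) : S.fl a c ^ 2 = S.fl (a^2 + p * c^2) (2 * a * c) := by
  rw [pow_two, fl_mul]; congr 1 <;> ring

lemma σ_fl (a c : ℚ) : S.σ (S.fl a c) = S.fl a c := by
  unfold fl; rw [σ_el]; simp

lemma norm_fl (a c : ℚ) : Algebra.norm ℚ (S.fl a c) = (a^2 - p * c^2)^2 := by
  unfold fl; rw [norm_el]; unfold NF; ring

lemma fl_nF {a c : ℚ} (h : S.fl a c ≠ 0) : a^2 - p * c^2 ≠ 0 := by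
  intro h0
  have := S.norm_fl a c
  rw [h0] at this
  simp at this
  exact h this

/-- `x · σ x`. -/
lemma mul_σ (a b c d : ℚ) : S.el a b c d * S.σ (S.el a b c d) =
    S.fl (a^2 + p * c^2 - 2 * p * b * d) (2 * a * c - b^2 - p * d^2) := by
  rw [σ_el, el_mul]; unfold fl; congr 1 <;> ring

lemma add_σ (a b c d : ℚ) : S.el a b c d + S.σ (S.el a b c d) = S.fl (2 * a) (2 * c) := by
  rw [σ_el, el_add]; unfold fl; congr 1 <;> ring

lemma fl_of_σ {x : K} (h : S.σ x = x) : ∃ a c, x = S.fl a c := by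
  obtain ⟨a, b, c, d, rfl⟩ := S.exists_el x
  rw [σ_el] at h
  have := S.el_inj h
  refine ⟨a, c, ?_⟩
  unfold fl
  congr 1 <;> linarith

lemma fl_inv (a c : ℚ) : ∃ a' c', (S.fl a c)⁻¹ = S.fl a' c' := by
  apply fl_of_σ; rw [map_inv₀, σ_fl]

lemma θ_ne : S.θ ≠ 0 := by
  intro h
  have := S.hθ
  rw [h] at this
  have h2 : (p : K) ≠ 0 := by exact_mod_cast S.hp.ne_zero
  exact h2 (by rw [← this]; simp)

lemma fl_s : S.fl 0 1 = S.θ ^ 2 := by simp [fl, el]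

/-- Norm-`n²` elements of `ℚ(√p)` are rational up to squares. -/
lemma fl_rat_of_norm_sq {a c n : ℚ} (h : a^2 - p * c^2 = n^2) (h0 : S.fl a c ≠ 0) :
    ∃ r : ℚ, r ≠ 0 ∧ ∃ a' c', S.fl a c = r * (S.fl a' c')^2 := by
  have hn : n ≠ 0 := by
    rintro rfl; exact S.fl_nF h0 (by rw [h]; norm_num)
  by_cases hc : a + n = 0
  · refine ⟨a, by intro ha; apply hn; linarith, 1, 0, ?_⟩
    have hc0 : c = 0 := by
      have : (p : ℚ) * c^2 = 0 := by
        have : a = -n := by linarith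
        rw [this] at h; linarith
      simpa [S.p_ne] using this
    rw [hc0, fl_rat, fl_rat]; simp
  · have h2 : ((2 * (a + n) : ℚ) : K) ≠ 0 := by
      rw [Rat.cast_ne_zero]; positivity
    refine ⟨(2 * (a + n))⁻¹, by positivity, a + n, c, ?_⟩
    rw [Rat.cast_inv, eq_inv_mul_iff_mul_eq₀ h2, fl_sq, ← S.fl_rat, fl_mul]
    congr 1
    · linear_combination h
    · ring

end Setup
end PQ



namespace PQ

lemma ideal_sq_dvd {R : Type*} [CommRing R] [IsDedekindDomain R] {I J : Ideal R}
    (h : I ^ 2 ∣ J ^ 2) : I ∣ J := by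
  classical
  by_cases hJ : J = 0
  · rw [hJ]; exact dvd_zero _
  by_cases hI : I = 0
  · rw [hI] at h
    rw [zero_pow (by norm_num), zero_dvd_iff] at h
    exact absurd (pow_eq_zero_iff (by norm_num) |>.1 h) hJ
  rw [UniqueFactorizationMonoid.dvd_iff_normalizedFactors_le_normalizedFactors hI hJ]
  rw [UniqueFactorizationMonoid.dvd_iff_normalizedFactors_le_normalizedFactors
    (pow_ne_zero _ hI) (pow_ne_zero _ hJ), UniqueFactorizationMonoid.normalizedFactors_pow,
    UniqueFactorizationMonoid.normalizedFactors_pow] at h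
  rw [Multiset.le_iff_count] at h ⊢
  intro a
  have := h a
  simp only [Multiset.count_nsmul] at this
  omega

lemma ideal_sq_inj {R : Type*} [CommRing R] [IsDedekindDomain R] {I J : Ideal R}
    (h : I ^ 2 = J ^ 2) : I = J :=
  le_antisymm (Ideal.le_of_dvd (ideal_sq_dvd h.symm.dvd)) (Ideal.le_of_dvd (ideal_sq_dvd h.dvd))

/-- A finite ring with an involution, with `2` and an anti-invariant unit. -/
lemma card_sq_of_involution {R : Type*} [CommRing R] (τ : R ≃+* R)
    (hτ : ∀ x, τ (τ x) = x) (t : R) (ht : τ t = -t) (u : R) (hu : t * u = 1) (v : R)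
    (hv : 2 * v = 1) : ∃ n : ℕ, Nat.card R = n ^ 2 := by
  let P := {x : R // τ x = x}
  have hτu : τ u = -u := by
    have h1 : τ t * τ u = 1 := by rw [← map_mul, hu, map_one]
    rw [ht] at h1
    linear_combination (-u) * h1 - τ u * hu
  have hτv : τ v = v := by
    have h1 : 2 * τ v = 1 := by
      have := congrArg τ hv
      rw [map_mul, map_one, map_ofNat] at this
      exact this
    linear_combination v * h1 - τ v * hv
  let f : P × P → R := fun x => x.1.1 + t * x.2.1
  have hf : Function.Bijective f := by
    constructor
    · rintro ⟨⟨x, hx⟩, ⟨y, hy⟩⟩ ⟨⟨x', hx'⟩, ⟨y', hy'⟩⟩ h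
      have h1 : x + t * y = x' + t * y' := h
      have h2 := congrArg τ h1
      simp only [map_add, map_mul, hx, hy, hx', hy', ht] at h2
      have e1 : x = x' := by
        linear_combination v * h1 + v * h2 - (x - x') * hv
      have e2 : y = y' := by
        subst e1
        linear_combination u * h1 - (y - y') * hu
      subst e1 e2
      rfl
    · intro z
      refine ⟨⟨⟨v * (z + τ z), ?_⟩, ⟨v * u * (z - τ z), ?_⟩⟩, ?_⟩
      · rw [map_mul, map_add, hτ, hτv]; ring
      · rw [map_mul, map_mul, map_sub, hτ, hτv, hτu]; ring
      · show v * (z + τ z) + t * (v * u * (z - τ z)) = z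
        linear_combination v * (z - τ z) * hu + z * hv
  refine ⟨Nat.card P, ?_⟩
  rw [← Nat.card_congr (Equiv.ofBijective f hf), Nat.card_prod, pow_two]

lemma exists_two_p_split (p : ℕ) (hp : p.Prime) (n : ℕ) (hn : n ≠ 0) :
    ∃ a b m : ℕ, n = 2 ^ a * p ^ b * m ∧ Nat.Coprime 2 m ∧ Nat.Coprime p m := by
  obtain ⟨a, m, h1, h2⟩ := Nat.exists_eq_pow_mul_and_not_dvd hn 2 (by norm_num)
  have hm : m ≠ 0 := by rintro rfl; simp at h1
  obtain ⟨b, m', h3, h4⟩ := Nat.exists_eq_pow_mul_and_not_dvd hm p hp.ne_one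
  refine ⟨a, b, m', by rw [h2, h4]; ring, ?_, ?_⟩
  · rw [Nat.Prime.coprime_iff_not_dvd Nat.prime_two]
    intro h; apply h1; rw [h4]; exact Dvd.dvd.mul_left h _
  · rw [Nat.Prime.coprime_iff_not_dvd hp]; exact h3

lemma dvd_two_p (p : ℕ) (hp : p.Prime) (a b n : ℕ) (h : n ∣ 2 ^ a * p ^ b) :
    ∃ j l, n = 2 ^ j * p ^ l := by
  obtain ⟨x, y, h1, h2, rfl⟩ := (Nat.dvd_mul).1 h
  obtain ⟨j, -, rfl⟩ := (Nat.dvd_prime_pow Nat.prime_two).1 h1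
  obtain ⟨l, -, rfl⟩ := (Nat.dvd_prime_pow hp).1 h2
  exact ⟨j, l, rfl⟩

namespace Setup

variable {p : ℕ} {K : Type*} [Field K] [NumberField K] (S : Setup p K)

/-- The involution on the ring of integers. -/
noncomputable def τ : 𝓞 K ≃+* 𝓞 K := RingOfIntegers.mapRingEquiv S.σ.toRingEquiv

lemma τ_coe (x : 𝓞 K) : ((S.τ x : 𝓞 K) : K) = S.σ x := rfl

lemma ττ (x : 𝓞 K) : S.τ (S.τ x) = x := by
  apply RingOfIntegers.ext; exact S.σσ _

/-- `θ` as an algebraic integer. -/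
def θO : 𝓞 K := ⟨S.θ, S.θ_int⟩

lemma θO_pow : S.θO ^ 4 = (p : 𝓞 K) := by
  apply RingOfIntegers.ext
  push_cast
  exact S.hθ

lemma τθ : S.τ S.θO = -S.θO := by
  apply RingOfIntegers.ext
  exact S.hσ

lemma inv_ideal (A : Ideal (𝓞 K)) (hA : A ≠ ⊥) (hτ : A.map (S.τ : 𝓞 K →+* 𝓞 K) = A) :
    ∃ n j l : ℕ, Ideal.absNorm A = n ^ 2 * 2 ^ j * p ^ l := by
  have hN : Ideal.absNorm A ≠ 0 := by rwa [Ne, Ideal.absNorm_eq_zero_iff]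
  obtain ⟨a, b, m, hm, h2, hpm⟩ := exists_two_p_split p S.hp _ hN
  set M := 2 ^ a * p ^ b with hM
  have hMm : Nat.Coprime M m := (h2.pow_left a).mul_left (hpm.pow_left b)
  let A' := A ⊔ Ideal.span {(m : 𝓞 K)}
  let B := A ⊔ Ideal.span {(M : 𝓞 K)}
  have hNA : ((M : 𝓞 K)) * m ∈ A := by
    have := Ideal.absNorm_mem A
    rw [hm] at this
    exact_mod_cast this
  have hco : A' ⊔ B = ⊤ := by
    have : IsCoprime (m : ℤ) (M : ℤ) := (Nat.isCoprime_iff_coprime.2 hMm).symm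
    obtain ⟨x, y, hxy⟩ := this
    rw [Ideal.eq_top_iff_one]
    have e : (1 : 𝓞 K) = x * m + y * M := by exact_mod_cast hxy.symm
    rw [e]
    apply Ideal.add_mem
    · exact (le_sup_left : A' ≤ A' ⊔ B) ((le_sup_right : _ ≤ A')
        (Ideal.mul_mem_left _ _ (Ideal.mem_span_singleton_self _)))
    · exact (le_sup_right : B ≤ A' ⊔ B) ((le_sup_right : _ ≤ B)
        (Ideal.mul_mem_left _ _ (Ideal.mem_span_singleton_self _)))
  have hAB : A = A' * B := by
    apply le_antisymm
    · rw [Ideal.mul_eq_inf_of_coprime hco]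
      exact le_inf le_sup_left le_sup_left
    · show (A ⊔ Ideal.span {(m : 𝓞 K)}) * (A ⊔ Ideal.span {(M : 𝓞 K)}) ≤ A
      rw [Ideal.mul_sup, Ideal.sup_mul, Ideal.sup_mul, Ideal.span_singleton_mul_span_singleton]
      refine sup_le (sup_le Ideal.mul_le_left Ideal.mul_le_right) (sup_le ?_ ?_)
      · exact Ideal.mul_le_left
      rw [Ideal.span_singleton_le_iff_mem, mul_comm]
      exact hNA
  have hA' : A'.map (S.τ : 𝓞 K →+* 𝓞 K) = A' := by
    show (A ⊔ Ideal.span {(m : 𝓞 K)}).map _ = _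
    rw [Ideal.map_sup, hτ, Ideal.map_span]
    simp [A']
  have hcard : ∃ n : ℕ, Ideal.absNorm A' = n ^ 2 := by
    rw [Ideal.absNorm_apply, Submodule.cardQuot_apply]
    let e : (𝓞 K ⧸ A') ≃+* (𝓞 K ⧸ A') := Ideal.quotientEquiv A' A' S.τ hA'.symm
    have he : ∀ x, e (Ideal.Quotient.mk A' x) = Ideal.Quotient.mk A' (S.τ x) := fun x => rfl
    have hm0 : (Ideal.Quotient.mk A' (m : 𝓞 K)) = 0 := by
      rw [Ideal.Quotient.eq_zero_iff_mem]
      exact (le_sup_right : _ ≤ A') (Ideal.mem_span_singleton_self _)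
    have hinv : ∀ c : ℕ, Nat.Coprime c m → ∃ v : 𝓞 K ⧸ A', (Ideal.Quotient.mk A' (c : 𝓞 K)) * v = 1 := by
      intro c hc
      obtain ⟨x, y, hxy⟩ := Nat.isCoprime_iff_coprime.2 hc
      refine ⟨Ideal.Quotient.mk A' (x : 𝓞 K), ?_⟩
      have e : (1 : 𝓞 K) = x * c + y * m := by exact_mod_cast hxy.symm
      have e2 := congrArg (Ideal.Quotient.mk A') e
      rw [map_add, map_mul, map_mul, hm0, mul_zero, add_zero, map_one] at e2
      rw [e2, mul_comm]
    obtain ⟨v, hv⟩ := hinv 2 h2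
    obtain ⟨w, hw⟩ := hinv p hpm
    refine card_sq_of_involution e ?_ (Ideal.Quotient.mk A' S.θO) ?_
      (Ideal.Quotient.mk A' S.θO ^ 3 * w) ?_ v ?_
    · intro x
      obtain ⟨x, rfl⟩ := Ideal.Quotient.mk_surjective x
      rw [he, he, ττ]
    · rw [he, τθ, map_neg]
    · rw [← hw, ← S.θO_pow, map_pow]; ring
    · rw [← hv, Nat.cast_ofNat, map_ofNat]
  obtain ⟨n, hn⟩ := hcard
  have hB : Ideal.absNorm B ∣ 2 ^ (a * 4) * p ^ (b * 4) := by
    have : Ideal.absNorm B ∣ Ideal.absNorm (Ideal.span {(M : 𝓞 K)}) :=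
      Ideal.absNorm_dvd_absNorm_of_le le_sup_right
    rw [Ideal.absNorm_span_natCast, RingOfIntegers.rank, S.finrank_eq, hM, mul_pow, ← pow_mul,
      ← pow_mul] at this
    exact this
  obtain ⟨j, l, hjl⟩ := dvd_two_p p S.hp _ _ _ hB
  refine ⟨n, j, l, ?_⟩
  conv_lhs => rw [hAB]
  rw [map_mul, hn, hjl]; ring

end Setup
end PQ



namespace PQ

set_option linter.unusedSectionVars false

section
variable {K : Type*} [Field K] [NumberField K]

lemma coeO_mul (x y : 𝓞 K) : ((x * y : 𝓞 K) : K) = x * y := rfl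
lemma coeO_add (x y : 𝓞 K) : ((x + y : 𝓞 K) : K) = x + y := rfl
lemma coeO_sub (x y : 𝓞 K) : ((x - y : 𝓞 K) : K) = x - y := rfl
lemma coeO_neg (x : 𝓞 K) : ((-x : 𝓞 K) : K) = -x := rfl
lemma coeO_pow (x : 𝓞 K) (n : ℕ) : ((x ^ n : 𝓞 K) : K) = (x : K) ^ n :=
  map_pow (algebraMap (𝓞 K) K) x n
lemma coeO_int (n : ℤ) : ((n : 𝓞 K) : K) = n := map_intCast (algebraMap (𝓞 K) K) n
lemma coeO_nat (n : ℕ) : ((n : 𝓞 K) : K) = n := map_natCast (algebraMap (𝓞 K) K) n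
lemma coeO_one : ((1 : 𝓞 K) : K) = 1 := rfl
lemma exists_O {x : K} (h : IsIntegral ℤ x) : ∃ y : 𝓞 K, (y : K) = x := ⟨⟨x, h⟩, rfl⟩
lemma coeO_zero : ((0 : 𝓞 K) : K) = 0 := rfl

/-- Elements generating the square of a fractional ideal. -/
def InS (α : K) : Prop :=
  ∃ D : ℤ, D ≠ 0 ∧ ∃ (x : 𝓞 K) (I : Ideal (𝓞 K)),
    (x : K) = α * (D : K) ^ 2 ∧ Ideal.span {x} = I ^ 2

lemma InS.mul {α β : K} (h : InS α) (h' : InS β) : InS (α * β) := by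
  obtain ⟨D, hD, x, I, h1, h2⟩ := h
  obtain ⟨D', hD', x', I', h1', h2'⟩ := h'
  refine ⟨D * D', mul_ne_zero hD hD', x * x', I * I', ?_, ?_⟩
  · rw [coeO_mul, h1, h1']; push_cast; ring
  · rw [← Ideal.span_singleton_mul_span_singleton, h2, h2', mul_pow]

lemma exists_int_mult (β : K) : ∃ D : ℤ, D ≠ 0 ∧ ∃ x : 𝓞 K, (x : K) = D * β := by
  have hz : IsAlgebraic ℤ β := (IsFractionRing.isAlgebraic_iff ℤ ℚ K).2 (Algebra.IsAlgebraic.isAlgebraic β)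
  obtain ⟨D, hD, h⟩ := hz.exists_integral_multiple
  refine ⟨D, hD, ⟨D • β, h⟩, ?_⟩
  simp

lemma InS.sq (β : K) : InS (β ^ 2) := by
  obtain ⟨D, hD, x, hx⟩ := exists_int_mult β
  refine ⟨D, hD, x ^ 2, Ideal.span {x}, ?_, ?_⟩
  · rw [coeO_pow, hx]; ring
  · rw [Ideal.span_singleton_pow]

lemma InS.inv {α : K} (h : InS α) : InS α⁻¹ := by
  by_cases h0 : α = 0
  · rw [h0, inv_zero, ← h0]; exact h
  have : α⁻¹ = α * (α⁻¹) ^ 2 := by field_simp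
  rw [this]
  exact h.mul (InS.sq _)

lemma InS.neg {α : K} (h : InS α) : InS (-α) := by
  obtain ⟨D, hD, x, I, h1, h2⟩ := h
  refine ⟨D, hD, -x, I, ?_, ?_⟩
  · rw [coeO_neg, h1]; ring
  · rw [Ideal.span_singleton_neg, h2]

lemma absNorm_cast (x : 𝓞 K) : ((Ideal.absNorm (Ideal.span {x}) : ℕ) : ℚ) = |Algebra.norm ℚ (x : K)| := by
  rw [Ideal.absNorm_span_singleton, ← Algebra.coe_norm_int, Nat.cast_natAbs, Int.cast_abs]

end

namespace Setup

variable {p : ℕ} {K : Type*} [Field K] [NumberField K] (S : Setup p K)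

lemma InS_σ {α : K} (h : InS α) : InS (S.σ α) := by
  obtain ⟨D, hD, x, I, h1, h2⟩ := h
  refine ⟨D, hD, S.τ x, I.map (S.τ : 𝓞 K →+* 𝓞 K), ?_, ?_⟩
  · rw [τ_coe, h1]; simp
  · rw [← Ideal.map_pow, ← h2, Ideal.map_span]; simp

lemma norm_int (S : Setup p K) (D : ℤ) : Algebra.norm ℚ (D : K) = (D : ℚ) ^ 4 := by
  have := Algebra.norm_algebraMap (R := ℚ) (S := K) (D : ℚ)
  rw [S.finrank_eq] at this
  simpa using this

lemma InS_norm (S : Setup p K) {α : K} (h : InS α) : ∃ n : ℚ, |Algebra.norm ℚ α| = n ^ 2 := by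
  obtain ⟨D, hD, x, I, h1, h2⟩ := h
  have h3 := absNorm_cast x
  have hD' : (D : ℚ) ≠ 0 := by exact_mod_cast hD
  rw [h1, h2, map_pow, map_mul, map_pow, S.norm_int, abs_mul] at h3
  refine ⟨Ideal.absNorm I / (D : ℚ) ^ 4, ?_⟩
  rw [abs_of_nonneg (by positivity : (0:ℚ) ≤ ((D : ℚ) ^ 4) ^ 2)] at h3
  rw [div_pow, eq_div_iff (by positivity)]
  rw [← h3]; push_cast; ring

lemma red_field {F : Type*} [Field F] (P a b c d : F) (hP : P ≠ 0) (h2 : (2 : F) ≠ 0)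
    (e0 : a * a + P * (b * d + c * c + d * b) = 0) (e1 : a * b + b * a + P * (c * d + d * c) = 0)
    (e2 : a * c + b * b + c * a + P * d * d = 0) (e3 : a * d + b * c + c * b + d * a = 0) :
    a = 0 ∧ b = 0 ∧ c = 0 ∧ d = 0 := by
  -- general fact: (x + y s)^2 = 0 implies x = y = 0
  have gen : ∀ x y : F, x * x + P * (y * y) = 0 → x * y = 0 → x = 0 ∧ y = 0 := by
    intro x y h1 h3
    rcases mul_eq_zero.1 h3 with h | h
    · subst h
      have : y * y = 0 := by
        have : P * (y * y) = 0 := by linear_combination h1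
        exact (mul_eq_zero.1 this).resolve_left hP
      exact ⟨rfl, mul_self_eq_zero.1 this⟩
    · subst h
      have : x * x = 0 := by linear_combination h1
      exact ⟨mul_self_eq_zero.1 this, rfl⟩
  -- u = a + c s, v = b + d s ; uv = 0, u^2 + s v^2 = 0
  have f1 : a * b + P * (c * d) = 0 := by
    have : 2 * (a * b + P * (c * d)) = 0 := by linear_combination e1
    exact (mul_eq_zero.1 this).resolve_left h2
  have f2 : a * d + b * c = 0 := by
    have : 2 * (a * d + b * c) = 0 := by linear_combination e3
    exact (mul_eq_zero.1 this).resolve_left h2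
  -- u^2 = A + B s,  u^3 = 0
  have g1 : (a * a + P * (c * c)) * a + P * (2 * a * c) * c = 0 := by
    linear_combination a * e0 + P * c * e2 - P * d * f1 - P * b * f2
  have g2 : (a * a + P * (c * c)) * c + (2 * a * c) * a = 0 := by
    linear_combination c * e0 + a * e2 - P * d * f2 - b * f1
  -- u^4 = 0
  have k := gen (a * a + P * (c * c)) (2 * a * c) (by linear_combination a * g1 + P * c * g2)
    (by
      have : 2 * ((a * a + P * (c * c)) * (2 * a * c)) = 0 := by
        linear_combination c * g1 + a * g2
      exact (mul_eq_zero.1 this).resolve_left h2)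
  have k2 := gen a c k.1 (by
    have : 2 * (a * c) = 0 := by linear_combination k.2
    exact (mul_eq_zero.1 this).resolve_left h2)
  obtain ⟨rfl, rfl⟩ := k2
  have k3 := gen b d (by linear_combination e2) (by
    have : (2 * P) * (b * d) = 0 := by linear_combination e0
    exact (mul_eq_zero.1 this).resolve_left (mul_ne_zero h2 hP))
  exact ⟨rfl, k3.1, rfl, k3.2⟩


lemma rad_q (S : Setup p K) {q : ℕ} (hq : q.Prime) (h2 : q ≠ 2) (hqp : q ≠ p) (a : 𝓞 K)
    (h : (q : 𝓞 K) ∣ a ^ 2) : (q : 𝓞 K) ∣ a := by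
  obtain ⟨z, hz⟩ := h
  obtain ⟨a0, b0, c0, d0, ha⟩ := S.int_coords a.isIntegral_coe
  obtain ⟨a1, b1, c1, d1, h1⟩ := S.int_coords z.isIntegral_coe
  have hz' : (a : K) ^ 2 = q * z := by
    have := congrArg (fun x : 𝓞 K => (x : K)) hz
    simpa only [coeO_pow, coeO_mul, coeO_nat] using this
  have e : S.el a0 b0 c0 d0 * S.el a0 b0 c0 d0 = S.el (4 * p * q) 0 0 0 * S.el a1 b1 c1 d1 := by
    rw [← ha, ← h1, el_rat]
    push_cast
    have h3 : (algebraMap (𝓞 K) K a) ^ 2 = q * algebraMap (𝓞 K) K z := hz'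
    linear_combination 16 * (p : K) ^ 2 * h3
  rw [el_mul, el_mul] at e
  obtain ⟨e0, e1, e2, e3⟩ := S.el_inj e
  have : Fact q.Prime := ⟨hq⟩
  have hP : ((p : ℕ) : ZMod q) ≠ 0 := by
    rw [Ne, ZMod.natCast_eq_zero_iff]
    intro h
    exact hqp ((Nat.prime_dvd_prime_iff_eq hq S.hp).1 h)
  have h2' : (2 : ZMod q) ≠ 0 := by
    have : ((2 : ℕ) : ZMod q) ≠ 0 := by
      rw [Ne, ZMod.natCast_eq_zero_iff]
      intro h
      exact h2 ((Nat.prime_dvd_prime_iff_eq hq Nat.prime_two).1 h)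
    simpa using this
  have key := red_field (p : ZMod q) (a0 : ZMod q) b0 c0 d0 hP h2'
    (by
      have : a0 * a0 + p * (b0 * d0 + c0 * c0 + d0 * b0) = 4 * p * q * a1 := by
        have := e0; push_cast at this; simp only [zero_mul, mul_zero, add_zero] at this
        exact_mod_cast this
      have := congrArg (Int.cast : ℤ → ZMod q) this
      push_cast at this; rw [this]; simp)
    (by
      have : a0 * b0 + b0 * a0 + p * (c0 * d0 + d0 * c0) = 4 * p * q * b1 := by
        have := e1; push_cast at this; simp only [zero_mul, mul_zero, add_zero] at this
        exact_mod_cast this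
      have := congrArg (Int.cast : ℤ → ZMod q) this
      push_cast at this; rw [this]; simp)
    (by
      have : a0 * c0 + b0 * b0 + c0 * a0 + p * d0 * d0 = 4 * p * q * c1 := by
        have := e2; push_cast at this; simp only [zero_mul, mul_zero, add_zero] at this
        exact_mod_cast this
      have := congrArg (Int.cast : ℤ → ZMod q) this
      push_cast at this; rw [this]; simp)
    (by
      have : a0 * d0 + b0 * c0 + c0 * b0 + d0 * a0 = 4 * p * q * d1 := by
        have := e3; push_cast at this; simp only [zero_mul, mul_zero, add_zero] at this
        exact_mod_cast this
      have := congrArg (Int.cast : ℤ → ZMod q) this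
      push_cast at this; rw [this]; simp)
  obtain ⟨k0, k1, k2, k3⟩ := key
  rw [ZMod.intCast_zmod_eq_zero_iff_dvd] at k0 k1 k2 k3
  obtain ⟨a2, rfl⟩ := k0
  obtain ⟨b2, rfl⟩ := k1
  obtain ⟨c2, rfl⟩ := k2
  obtain ⟨d2, rfl⟩ := k3
  have hd : (q : 𝓞 K) ∣ ((4 * p : ℕ) : 𝓞 K) * a := by
    obtain ⟨y, hy⟩ := exists_O (S.el_int a2 b2 c2 d2)
    refine ⟨y, ?_⟩
    apply RingOfIntegers.ext
    rw [coeO_mul, coeO_mul, coeO_nat, coeO_nat, hy, Nat.cast_mul, Nat.cast_ofNat]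
    show (4 * p : K) * algebraMap (𝓞 K) K a = q * S.el a2 b2 c2 d2
    rw [ha]
    unfold el
    push_cast
    ring
  have hc : Nat.Coprime q (4 * p) := by
    rw [Nat.Prime.coprime_iff_not_dvd hq, hq.dvd_mul]
    rintro (h | h)
    · have : q ∣ 2 ^ 2 := h
      exact h2 ((Nat.prime_dvd_prime_iff_eq hq Nat.prime_two).1 (hq.dvd_of_dvd_pow this))
    · exact hqp ((Nat.prime_dvd_prime_iff_eq hq S.hp).1 h)
  exact (Nat.Coprime.cast (R := 𝓞 K) hc).dvd_of_dvd_mul_left hd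

lemma int_dvd_of (m r : ℤ) (h : (m : 𝓞 K) ∣ (r : 𝓞 K)) : m ∣ r := by
  obtain ⟨z, hz⟩ := h
  by_cases hm : m = 0
  · subst hm
    simp at hz
    simp [hz]
  have hz' : (r : K) = m * z := by
    have := congrArg (fun x : 𝓞 K => (x : K)) hz
    simpa only [coeO_mul, coeO_int] using this
  have hm' : (m : K) ≠ 0 := by exact_mod_cast hm
  have h2 : algebraMap ℚ K ((r : ℚ) / m) = algebraMap (𝓞 K) K z := by
    rw [eq_ratCast]; push_cast; rw [div_eq_iff hm', hz', mul_comm]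
  have h3 : IsIntegral ℤ ((r : ℚ) / m) := by
    rw [← isIntegral_algebraMap_iff (algebraMap ℚ K).injective, h2]
    exact z.isIntegral_coe
  obtain ⟨n, hn⟩ := IsIntegrallyClosed.isIntegral_iff.1 h3
  refine ⟨n, ?_⟩
  have hm'' : (m : ℚ) ≠ 0 := by exact_mod_cast hm
  rw [eq_intCast, eq_div_iff hm''] at hn
  have : n * m = r := by exact_mod_cast hn
  linarith

lemma unram_sf (S : Setup p K) {a : ℕ} (ha : Squarefree a) (h : InS (a : K)) :
    a = 1 ∨ a = 2 ∨ a = p ∨ a = 2 * p := by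
  obtain ⟨D, hD, x, I, h1, h2⟩ := h
  have hx : x = (a : 𝓞 K) * (D : 𝓞 K) ^ 2 := by
    apply RingOfIntegers.ext
    rw [coeO_mul, coeO_pow, coeO_nat, coeO_int, h1]
  have hDO : (D : 𝓞 K) ≠ 0 := by exact_mod_cast hD
  have hdvd : Ideal.span {(D : 𝓞 K)} ∣ I := by
    apply ideal_sq_dvd
    rw [← h2, hx, Ideal.span_singleton_pow, Ideal.dvd_span_singleton, Ideal.mem_span_singleton]
    exact dvd_mul_left _ _
  obtain ⟨A, rfl⟩ := hdvd
  have hA : A ^ 2 = Ideal.span {(a : 𝓞 K)} := by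
    rw [hx, mul_pow, mul_comm, ← Ideal.span_singleton_mul_span_singleton,
      Ideal.span_singleton_pow] at h2
    refine (mul_left_cancel₀ ?_ h2).symm
    rw [Ne, Ideal.zero_eq_bot, Ideal.span_singleton_eq_bot]
    exact pow_ne_zero _ hDO
  have hq : ∀ q : ℕ, q.Prime → q ∣ a → q = 2 ∨ q = p := by
    intro q hq hqa
    by_contra hcon
    push Not at hcon
    have hle : A ≤ Ideal.span {(q : 𝓞 K)} := by
      intro y hy
      rw [Ideal.mem_span_singleton]
      apply S.rad_q hq hcon.1 hcon.2
      have : y ^ 2 ∈ A ^ 2 := Ideal.pow_mem_pow hy 2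
      rw [hA, Ideal.mem_span_singleton] at this
      refine dvd_trans ?_ this
      exact_mod_cast (Nat.cast_dvd_cast (α := 𝓞 K) hqa)
    have h3 : A ^ 2 ≤ Ideal.span {(q : 𝓞 K)} ^ 2 := Ideal.pow_right_mono hle 2
    rw [hA, Ideal.span_singleton_pow, Ideal.span_singleton_le_span_singleton] at h3
    have h4 : ((q : ℤ) ^ 2) ∣ (a : ℤ) := by
      apply int_dvd_of (K := K)
      exact_mod_cast h3
    have h5 : q * q ∣ a := by
      rw [← pow_two]; exact_mod_cast h4
    have := ha q h5
    exact hq.one_lt.ne' (Nat.isUnit_iff.1 this)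
  obtain ⟨i, j, m, hm, hm2, hmp⟩ := exists_two_p_split p S.hp a ha.ne_zero
  have hm1 : m = 1 := by
    by_contra hne
    obtain ⟨q, hq1, hq2⟩ := Nat.exists_prime_and_dvd hne
    rcases hq q hq1 (by rw [hm]; exact Dvd.dvd.mul_left hq2 _) with rfl | rfl
    · exact (Nat.Prime.coprime_iff_not_dvd hq1).1 hm2 hq2
    · exact (Nat.Prime.coprime_iff_not_dvd hq1).1 hmp hq2
  have le1 : ∀ (q k : ℕ), q.Prime → q ^ k ∣ a → k ≤ 1 := by
    intro q k hq hk
    by_contra hlt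
    have : q * q ∣ a := by
      rw [← pow_two]; exact dvd_trans (pow_dvd_pow q (by omega)) hk
    exact hq.one_lt.ne' (Nat.isUnit_iff.1 (ha q this))
  have hi := le1 2 i Nat.prime_two (by rw [hm, mul_assoc]; exact dvd_mul_right _ _)
  have hj := le1 p j S.hp (by rw [hm, mul_comm (2 ^ i), mul_assoc]; exact dvd_mul_right _ _)
  rw [hm, hm1]
  interval_cases i <;> interval_cases j <;> simp

lemma unram (S : Setup p K) {r : ℚ} (hr : r ≠ 0) (h : InS (r : K)) :
    ∃ t : ℚ, t ≠ 0 ∧ (|r| = t ^ 2 ∨ |r| = 2 * t ^ 2 ∨ |r| = p * t ^ 2 ∨ |r| = 2 * p * t ^ 2) := by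
  have hn0 : (r.num * r.den).natAbs ≠ 0 := by
    rw [Int.natAbs_ne_zero]
    exact mul_ne_zero (Rat.num_ne_zero.2 hr) (by exact_mod_cast r.den_ne_zero)
  obtain ⟨a, b, hab, hsq⟩ := Nat.sq_mul_squarefree (r.num * r.den).natAbs
  have hb : b ≠ 0 := by rintro rfl; exact hn0 (by rw [← hab]; simp)
  have hb' : (b : ℚ) ≠ 0 := by exact_mod_cast hb
  have hd : (r.den : ℚ) ≠ 0 := by exact_mod_cast r.den_ne_zero
  have e : |r| = a * (b / r.den) ^ 2 := by
    have h1 : (b : ℚ) ^ 2 * a = ((|r.num * r.den| : ℤ) : ℚ) := by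
      rw [Int.abs_eq_natAbs, ← hab]; push_cast; ring
    have h2 : r * r.den = r.num := Rat.mul_den_eq_num r
    have h3 : ((r.num * r.den : ℤ) : ℚ) = r * (r.den) ^ 2 := by push_cast; rw [← h2]; ring
    rw [div_pow, ← mul_div_assoc, eq_div_iff (by positivity), mul_comm (a : ℚ), h1]
    rw [Int.cast_abs, h3, abs_mul, abs_of_nonneg (by positivity : (0 : ℚ) ≤ (r.den : ℚ) ^ 2)]
  have hI : InS ((|r| : ℚ) : K) := by
    rcases abs_choice r with h' | h' <;> rw [h']
    · exact h
    · rw [Rat.cast_neg]; exact h.neg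
  have hIa : InS (a : K) := by
    have : (a : K) = ((|r| : ℚ) : K) * ((r.den : K) / b) ^ 2 := by
      have h1 : (a : ℚ) = |r| * (r.den / b) ^ 2 := by rw [e]; field_simp
      have := congrArg (Rat.cast : ℚ → K) h1
      push_cast at this ⊢
      exact this
    rw [this]
    exact hI.mul (InS.sq _)
  refine ⟨b / r.den, div_ne_zero hb' hd, ?_⟩
  rcases S.unram_sf hsq hIa with h' | h' | h' | h' <;> rw [e, h'] <;> simp

end Setup
end PQ



namespace PQ
namespace Setup

variable {p : ℕ} {K : Type*} [Field K] [NumberField K] (S : Setup p K)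

lemma pos_of_norm (S : Setup p K) (u0 u1 v0 v1 n : ℚ) (hn : n ≠ 0)
    (h : (u0^2 + p * u1^2 - 2 * p * v0 * v1)^2 - p * (2 * u0 * u1 - v0^2 - p * v1^2)^2 = n^2) :
    0 < u0^2 + p * u1^2 - 2 * p * v0 * v1 := by
  set w : ℝ := Real.sqrt p with hw
  have hw2 : w ^ 2 = p := Real.sq_sqrt (by positivity)
  have hw0 : 0 ≤ w := Real.sqrt_nonneg _
  set a : ℚ := u0^2 + p * u1^2 - 2 * p * v0 * v1 with ha
  set b : ℚ := 2 * u0 * u1 - v0^2 - p * v1^2 with hb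
  have h1 : (a : ℝ) - b * w = (u0 - u1 * w)^2 + w * (v0 - v1 * w)^2 := by
    rw [ha, hb]; push_cast; rw [← hw2]; ring
  have h2 : ((a : ℝ) - b * w) * (a + b * w) = n ^ 2 := by
    have : ((a ^ 2 - p * b ^ 2 : ℚ) : ℝ) = ((n ^ 2 : ℚ) : ℝ) := by rw [h]
    push_cast at this
    rw [← hw2] at this
    linear_combination this
  have h3 : (0 : ℝ) < (n : ℝ) ^ 2 := by
    have : (n : ℝ) ≠ 0 := by exact_mod_cast hn
    positivity
  have h4 : 0 ≤ (a : ℝ) - b * w := by rw [h1]; positivity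
  have h5 : 0 < (a : ℝ) - b * w := by
    rcases h4.lt_or_eq with h | h
    · exact h
    · rw [← h, zero_mul] at h2; linarith
  have h6 : 0 < (a : ℝ) + b * w := by
    rw [← h2] at h3
    exact (pos_iff_pos_of_mul_pos h3).1 h5
  have : (0 : ℝ) < a := by linarith
  exact_mod_cast this

lemma norm_ne {x : K} (hx : x ≠ 0) : Algebra.norm ℚ x ≠ 0 := by
  rwa [Ne, Algebra.norm_eq_zero_iff]

lemma main_S {α : K} (h0 : α ≠ 0) (h : InS α) :
    ∃ g : K, S.σ g = g ∧ g ≠ 0 ∧ (α * S.σ α = g ^ 2 ∨ α * S.σ α = 2 * g ^ 2) := by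
  have hσ0 : S.σ α ≠ 0 := by simpa using h0
  obtain ⟨n', hn'⟩ := S.InS_norm h
  have hI : InS (α * S.σ α) := h.mul (S.InS_σ h)
  have hδ0 : α * S.σ α ≠ 0 := mul_ne_zero h0 hσ0
  have hN := norm_ne h0
  obtain ⟨u0, v0, u1, v1, rfl⟩ := S.exists_el α
  obtain ⟨n, hn⟩ : ∃ n : ℚ, n = |n'| := ⟨_, rfl⟩
  rw [norm_el] at hn' hN
  have hn0 : n ≠ 0 := by
    rintro rfl
    have : n' = 0 := by simpa using hn.symm
    rw [this] at hn'
    apply hN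
    simpa using hn'
  have hnp : 0 < n := lt_of_le_of_ne (by rw [hn]; exact abs_nonneg _) hn0.symm
  have hnn : n ^ 2 = n' ^ 2 := by rw [hn, sq_abs]
  rw [← hnn] at hn'
  rw [mul_σ] at hI hδ0 ⊢
  have hpos := S.pos_of_norm u0 u1 v0 v1 n hn0
  unfold NF at hn'
  set a := u0^2 + p * u1^2 - 2 * p * v0 * v1 with ha
  set b := 2 * u0 * u1 - v0^2 - p * v1^2 with hb
  have hab : a ^ 2 - p * b ^ 2 = n ^ 2 := by
    rcases abs_choice (a ^ 2 - p * b ^ 2) with h' | h'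
    · rw [← h']; exact hn'
    · exfalso
      apply hn0
      refine no_neg_normQ S.hp S.hmod 1 (Or.inl rfl) a b n ?_
      push_cast
      linarith [hn', h']
  have ha0 := hpos hab
  have hr0 : (2 * (a + n)) ≠ 0 := by positivity
  have hrp : 0 < (2 * (a + n)) := by positivity
  have key : S.fl a b * ((2 * (a + n) : ℚ) : K) = S.fl (a + n) b ^ 2 := by
    rw [fl_sq, ← S.fl_rat, fl_mul]
    congr 1
    · linear_combination hab
    · ring
  have hrI : InS ((2 * (a + n) : ℚ) : K) := by
    have : ((2 * (a + n) : ℚ) : K) = S.fl (a + n) b ^ 2 * (S.fl a b)⁻¹ := by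
      rw [← key]; field_simp
    rw [this]
    exact (InS.sq _).mul hI.inv
  obtain ⟨t, ht, hcase⟩ := S.unram hr0 hrI
  rw [abs_of_pos hrp] at hcase
  have hσG : S.σ (S.fl (a + n) b) = S.fl (a + n) b := S.σ_fl _ _
  have hσt : ∀ r : ℚ, S.σ ((r : ℚ) : K) = r := fun r => by simp
  have htK : (t : K) ≠ 0 := by exact_mod_cast ht
  have hG0 : S.fl (a + n) b ≠ 0 := by
    intro h
    rw [h] at key
    have : ((2 * (a + n) : ℚ) : K) ≠ 0 := by exact_mod_cast hr0
    simp only [ne_eq, OfNat.ofNat_ne_zero, not_false_eq_true, zero_pow] at key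
    exact (mul_ne_zero hδ0 this) key
  have hθ := S.θ_ne
  have hθ4 := S.hθ
  set G := S.fl (a + n) b with hG
  have hσθ : S.σ (S.θ ^ 2) = S.θ ^ 2 := by rw [map_pow, S.hσ]; ring
  rcases hcase with h' | h' | h' | h'
  · refine ⟨G / t, by rw [map_div₀, hσt, hσG], div_ne_zero hG0 htK, Or.inl ?_⟩
    rw [h'] at key; push_cast at key
    rw [div_pow, ← key]; field_simp
  · refine ⟨G / (2 * t), by rw [map_div₀, map_mul, hσt, hσG, map_ofNat],
      div_ne_zero hG0 (mul_ne_zero two_ne_zero htK), Or.inr ?_⟩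
    rw [h'] at key; push_cast at key
    rw [div_pow, ← key]; field_simp
  · refine ⟨G / (t * S.θ ^ 2), by rw [map_div₀, map_mul, hσt, hσG, hσθ],
      div_ne_zero hG0 (mul_ne_zero htK (pow_ne_zero _ hθ)), Or.inl ?_⟩
    rw [h'] at key; push_cast at key
    rw [div_pow, ← key, ← hθ4]; field_simp
  · refine ⟨G / (2 * t * S.θ ^ 2), by rw [map_div₀, map_mul, map_mul, hσt, hσG, hσθ, map_ofNat],
      div_ne_zero hG0 (mul_ne_zero (mul_ne_zero two_ne_zero htK) (pow_ne_zero _ hθ)), Or.inr ?_⟩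
    rw [h'] at key; push_cast at key
    rw [div_pow, ← key, ← hθ4]; field_simp

lemma pow_form (P : ℚ) (hP : P ≠ 0) (l : ℕ) :
    ∃ t : ℚ, t ≠ 0 ∧ (P ^ l = t ^ 2 ∨ P ^ l = P * t ^ 2) := by
  rcases Nat.even_or_odd' l with ⟨k, rfl | rfl⟩
  · exact ⟨P ^ k, pow_ne_zero _ hP, Or.inl (by ring)⟩
  · exact ⟨P ^ k, pow_ne_zero _ hP, Or.inr (by ring)⟩

/-- `σ`-invariant elements of `S`. -/
lemma inv_S {a c : ℚ} (h0 : S.fl a c ≠ 0) (h : InS (S.fl a c)) :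
    ∃ (a' c' n : ℚ) (γ : K), γ ≠ 0 ∧ n ≠ 0 ∧ S.fl a c = S.fl a' c' * γ ^ 2 ∧
      (a' ^ 2 - p * c' ^ 2 = n ^ 2 ∨ a' ^ 2 - p * c' ^ 2 = 2 * n ^ 2) := by
  obtain ⟨D, hD, x, I, h1, h2⟩ := h
  have hx0 : x ≠ 0 := by
    rintro rfl
    rw [coeO_zero] at h1
    have : (D : K) ≠ 0 := by exact_mod_cast hD
    exact (mul_ne_zero h0 (pow_ne_zero 2 this)) h1.symm
  have hτx : S.τ x = x := by
    apply RingOfIntegers.ext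
    rw [τ_coe, h1, map_mul, σ_fl]; simp
  have hI0 : I ≠ ⊥ := by
    rintro rfl
    rw [← Ideal.zero_eq_bot, zero_pow two_ne_zero, Ideal.zero_eq_bot, Ideal.span_singleton_eq_bot] at h2
    exact hx0 h2
  have hI : I.map (S.τ : 𝓞 K →+* 𝓞 K) = I := by
    apply ideal_sq_inj
    rw [← Ideal.map_pow, ← h2, Ideal.map_span]
    simp [hτx]
  obtain ⟨m, j, l, hm⟩ := S.inv_ideal I hI0 hI
  have hIn : Ideal.absNorm I ≠ 0 := by rwa [Ne, Ideal.absNorm_eq_zero_iff]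
  have hm0 : (m : ℚ) ≠ 0 := by
    have : m ≠ 0 := by
      rintro rfl; apply hIn; rw [hm]; simp
    exact_mod_cast this
  have hDq : (D : ℚ) ≠ 0 := by exact_mod_cast hD
  set N := a ^ 2 - p * c ^ 2 with hN
  have e : |N| = (m / (D : ℚ) ^ 2) ^ 2 * 2 ^ j * p ^ l := by
    have h3 := absNorm_cast x
    rw [h1, h2, map_pow, map_mul, map_pow, S.norm_int, norm_fl, hm, ← hN] at h3
    have h4 : (((m : ℚ) ^ 2 * 2 ^ j * p ^ l)) ^ 2 = (|N| * D ^ 4) ^ 2 := by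
      push_cast at h3
      rw [h3, abs_of_nonneg (by positivity), mul_pow, sq_abs]
    have h5 := (pow_left_inj₀ (by positivity) (by positivity) two_ne_zero).1 h4
    have : |N| = ((m : ℚ) ^ 2 * 2 ^ j * p ^ l) / D ^ 4 := by
      rw [h5]; field_simp
    rw [this]; field_simp
  obtain ⟨t, ht, h2t⟩ := pow_form 2 two_ne_zero j
  obtain ⟨w, hw, hpw⟩ := pow_form p S.p_ne l
  set n := (m / (D : ℚ) ^ 2) * t * w with hn
  have hn0 : n ≠ 0 := mul_ne_zero (mul_ne_zero (div_ne_zero hm0 (pow_ne_zero _ hDq)) ht) hw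
  have e2 : ∃ r : ℤ, (r = 1 ∨ r = 2) ∧ (|N| = r * n ^ 2 ∨ |N| = r * (p * n ^ 2)) := by
    rcases h2t with h2t | h2t <;> rcases hpw with hpw | hpw
    · exact ⟨1, Or.inl rfl, Or.inl (by rw [e, h2t, hpw]; push_cast; ring)⟩
    · exact ⟨1, Or.inl rfl, Or.inr (by rw [e, h2t, hpw]; push_cast; ring)⟩
    · exact ⟨2, Or.inr rfl, Or.inl (by rw [e, h2t, hpw]; push_cast; ring)⟩
    · exact ⟨2, Or.inr rfl, Or.inr (by rw [e, h2t, hpw]; push_cast; ring)⟩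
  obtain ⟨r, hr, hcase⟩ := e2
  have fin : ∀ (a' c' n : ℚ), a' ^ 2 - p * c' ^ 2 = r * n ^ 2 →
    (a' ^ 2 - p * c' ^ 2 = n ^ 2 ∨ a' ^ 2 - p * c' ^ 2 = 2 * n ^ 2) := by
    intro a' c' n h
    rcases hr with rfl | rfl
    · left; rw [h]; push_cast; ring
    · right; rw [h]; push_cast; ring
  rcases hcase with hc | hc
  · refine ⟨a, c, n, 1, one_ne_zero, hn0, by ring, fin _ _ _ ?_⟩
    rcases abs_choice N with h' | h'
    · rw [← hN, ← h', hc]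
    · exfalso
      apply hn0
      refine no_neg_normQ S.hp S.hmod r hr a c n ?_
      linarith
  · refine ⟨p * c, a, p * n, S.θ⁻¹, inv_ne_zero S.θ_ne, mul_ne_zero S.p_ne hn0, ?_, fin _ _ _ ?_⟩
    · have : S.fl (p * c) a = S.fl a c * S.θ ^ 2 := by
        rw [← fl_s, fl_mul]; congr 1 <;> ring
      rw [this]
      have := S.θ_ne
      field_simp
    · rcases abs_choice N with h' | h'
      · exfalso
        apply mul_ne_zero S.p_ne hn0
        refine no_neg_normQ S.hp S.hmod r hr (p * c) a (p * n) ?_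
        rw [h'] at hc
        linear_combination (-(p : ℚ)) * hc
      · rw [h'] at hc
        linear_combination (p : ℚ) * hc

/-- Elements of `S₁`. -/
lemma main_S1 {α g : K} (h0 : α ≠ 0) (h : InS α) (hg : S.σ g = g) (hαg : α * S.σ α = g ^ 2) :
    ∃ (a c n : ℚ) (β : K), β ≠ 0 ∧ n ≠ 0 ∧ α = S.fl a c * β ^ 2 ∧
      (a ^ 2 - p * c ^ 2 = n ^ 2 ∨ a ^ 2 - p * c ^ 2 = 2 * n ^ 2) := by
  have main : ∃ f β : K, S.σ f = f ∧ β ≠ 0 ∧ α = f * β ^ 2 := by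
    have key : α * (α + S.σ α + 2 * g) = (α + g) ^ 2 := by linear_combination hαg
    by_cases hf : α + S.σ α + 2 * g = 0
    · refine ⟨-g, 1, by rw [map_neg, hg], one_ne_zero, ?_⟩
      rw [hf, mul_zero] at key
      have := pow_eq_zero_iff (two_ne_zero) |>.1 key.symm
      linear_combination this
    · refine ⟨α + S.σ α + 2 * g, (α + g) / (α + S.σ α + 2 * g), ?_, ?_, ?_⟩
      · rw [map_add, map_add, map_mul, hg, σσ, map_ofNat]; ring
      · apply div_ne_zero _ hf
        intro h
        rw [h] at key
        simp at key
        rcases key with h | h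
        · exact h0 h
        · exact hf h
      · rw [div_pow, ← key]; field_simp
  obtain ⟨f, β, hf, hβ, hα⟩ := main
  obtain ⟨a, c, rfl⟩ := S.fl_of_σ hf
  have hf0 : S.fl a c ≠ 0 := by
    intro h
    rw [h, zero_mul] at hα
    exact h0 hα
  have hfS : InS (S.fl a c) := by
    have : S.fl a c = α * (β⁻¹) ^ 2 := by rw [hα]; field_simp
    rw [this]; exact h.mul (InS.sq _)
  obtain ⟨a', c', n, γ, hγ, hn, e, hc⟩ := S.inv_S hf0 hfS
  refine ⟨a', c', n, γ * β, mul_ne_zero hγ hβ, hn, ?_, hc⟩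
  rw [hα, e]; ring

/-- Elements of `S` that are rational up to squares. -/
lemma main_S2 (S : Setup p K) {α β : K} {r : ℚ} (h0 : α ≠ 0) (h : InS α) (hα : α = r * β ^ 2) :
    ∃ γ : K, γ ≠ 0 ∧ (α = γ ^ 2 ∨ α = -γ ^ 2 ∨ α = 2 * γ ^ 2 ∨ α = -(2 * γ ^ 2)) := by
  have hr : r ≠ 0 := by rintro rfl; apply h0; rw [hα]; simp
  have hβ : β ≠ 0 := by rintro rfl; apply h0; rw [hα]; simp
  have hrS : InS (r : K) := by
    have : (r : K) = α * (β⁻¹) ^ 2 := by rw [hα]; field_simp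
    rw [this]; exact h.mul (InS.sq _)
  obtain ⟨t, ht, hcase⟩ := S.unram hr hrS
  have htK : (t : K) ≠ 0 := by exact_mod_cast ht
  have hθ := S.θ_ne
  have main : ∃ γ : K, γ ≠ 0 ∧ (((|r| : ℚ) : K) = γ ^ 2 ∨ ((|r| : ℚ) : K) = 2 * γ ^ 2) := by
    rcases hcase with h' | h' | h' | h'
    · exact ⟨t, htK, Or.inl (by rw [h']; push_cast; ring)⟩
    · exact ⟨t, htK, Or.inr (by rw [h']; push_cast; ring)⟩
    · exact ⟨t * S.θ ^ 2, mul_ne_zero htK (pow_ne_zero _ hθ),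
        Or.inl (by rw [h']; push_cast; rw [← S.hθ]; ring)⟩
    · exact ⟨t * S.θ ^ 2, mul_ne_zero htK (pow_ne_zero _ hθ),
        Or.inr (by rw [h']; push_cast; rw [← S.hθ]; ring)⟩
  obtain ⟨γ, hγ, hc⟩ := main
  refine ⟨γ * β, mul_ne_zero hγ hβ, ?_⟩
  rcases abs_choice r with h' | h'
  · rw [h'] at hc
    rcases hc with hc | hc
    · left; rw [hα, hc]; ring
    · right; right; left; rw [hα, hc]; ring
  · rw [h'] at hc
    have hr' : (r : K) = -((-r : ℚ) : K) := by push_cast; ring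
    rcases hc with hc | hc
    · right; left; rw [hα, hr', hc]; ring
    · right; right; right; rw [hα, hr', hc]; ring

end Setup
end PQ



namespace PQ

lemma relIndex_le_two {G : Type*} [Group G] {H L : Subgroup G}
    (h : ∀ a ∈ L, ∀ b ∈ L, a ∉ H → b ∉ H → a * b ∈ H) : H.relIndex L ∣ 2 := by
  by_cases hle : L ≤ H
  · rw [Subgroup.relIndex_eq_one.2 hle]; norm_num
  · obtain ⟨a, haL, haH⟩ := Set.not_subset.1 hle
    rw [Subgroup.relIndex_eq_two_iff.2 ⟨a, haL, fun b hb => ?_⟩]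
    by_cases hbH : b ∈ H
    · right
      refine ⟨hbH, fun h' => haH ?_⟩
      exact (Subgroup.mul_mem_cancel_left H hbH).1 h'
    · left
      exact ⟨h b hb a haL hbH haH, hbH⟩

lemma mul_mem_of_relIndex_dvd_two {G : Type*} [Group G] {H L : Subgroup G}
    (h : H.relIndex L ∣ 2) {a b : G} (ha : a ∈ L) (hb : b ∈ L) (ha' : a ∉ H) (hb' : b ∉ H) :
    a * b ∈ H := by
  rcases (Nat.dvd_prime Nat.prime_two).1 h with h | h
  · exact absurd (Subgroup.relIndex_eq_one.1 h ha) ha'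
  · have := (Subgroup.mul_mem_iff_of_index_two (H := H.subgroupOf L) h (a := ⟨a, ha⟩) (b := ⟨b, hb⟩))
    simp only [Subgroup.mem_subgroupOf] at this
    exact this.2 (by simp [ha', hb'])

lemma basis_hom {ι A : Type*} {_ : AddCommMonoid A} {_ : Module ℤ A} (bs : Module.Basis ι ℤ A) {i j : ι} (hij : i ≠ j) :
    ∃ c : A →+ ZMod 2 × ZMod 2, Function.Surjective c := by
  refine ⟨((Int.castAddHom (ZMod 2)).comp (bs.coord i).toAddMonoidHom).prod
      ((Int.castAddHom (ZMod 2)).comp (bs.coord j).toAddMonoidHom), ?_⟩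
  rintro ⟨x, y⟩
  refine ⟨(x.val : ℤ) • bs i + (y.val : ℤ) • bs j, ?_⟩
  simp [bs.repr_self, hij, hij.symm]

section
variable (K : Type*) [Field K] [NumberField K]

/-- The group of elements generating squares of ideals. -/
def SS : Subgroup Kˣ where
  carrier := {α | InS (α : K)}
  mul_mem' := fun ha hb => by
    show InS _
    rw [Units.val_mul]; exact InS.mul ha hb
  one_mem' := by
    show InS _
    have := InS.sq (1 : K)
    rwa [one_pow] at this
  inv_mem' := fun ha => by
    show InS _
    rw [Units.val_inv_eq_inv_val]; exact InS.inv ha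

/-- Squares up to sign. -/
def S3 : Subgroup Kˣ where
  carrier := {α | ∃ β : K, (α : K) = β ^ 2 ∨ (α : K) = - β ^ 2}
  mul_mem' := by
    rintro a b ⟨β, h⟩ ⟨γ, h'⟩
    refine ⟨β * γ, ?_⟩
    rw [Units.val_mul]
    rcases h with h | h <;> rcases h' with h' | h' <;> rw [h, h']
    · left; ring
    · right; ring
    · right; ring
    · left; ring
  one_mem' := ⟨1, Or.inl (by simp)⟩
  inv_mem' := by
    rintro a ⟨β, h⟩
    refine ⟨β⁻¹, ?_⟩
    rw [Units.val_inv_eq_inv_val]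
    rcases h with h | h <;> rw [h]
    · left; rw [inv_pow]
    · right; rw [inv_pow, neg_inv]

/-- Elements of `SS` rational up to squares. -/
def S2 : Subgroup Kˣ where
  carrier := {α | InS (α : K) ∧ ∃ (r : ℚ) (β : K), (α : K) = r * β ^ 2}
  mul_mem' := by
    rintro a b ⟨h1, r, β, h⟩ ⟨h2, r', γ, h'⟩
    refine ⟨by rw [Units.val_mul]; exact h1.mul h2, r * r', β * γ, ?_⟩
    rw [Units.val_mul, h, h']; push_cast; ring
  one_mem' := ⟨by have := InS.sq (1 : K); rwa [one_pow] at this, 1, 1, by simp⟩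
  inv_mem' := by
    rintro a ⟨h1, r, β, h⟩
    refine ⟨by rw [Units.val_inv_eq_inv_val]; exact h1.inv, r⁻¹, β⁻¹, ?_⟩
    rw [Units.val_inv_eq_inv_val, h, mul_inv, inv_pow, Rat.cast_inv]

/-- Image of the units of the ring of integers. -/
def EE : Subgroup Kˣ := (Units.map (algebraMap (𝓞 K) K : 𝓞 K →* K)).range

end

namespace Setup

variable {p : ℕ} {K : Type*} [Field K] [NumberField K] (S : Setup p K)

/-- Elements of `SS` of square relative norm. -/
def S1 : Subgroup Kˣ where
  carrier := {α | InS (α : K) ∧ ∃ g : K, S.σ g = g ∧ (α : K) * S.σ α = g ^ 2}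
  mul_mem' := by
    rintro a b ⟨h1, g, hg, h⟩ ⟨h2, g', hg', h'⟩
    refine ⟨by rw [Units.val_mul]; exact h1.mul h2, g * g', by rw [map_mul, hg, hg'], ?_⟩
    rw [Units.val_mul, map_mul]; linear_combination (b : K) * S.σ b * h + g ^ 2 * h'
  one_mem' := ⟨by have := InS.sq (1 : K); rwa [one_pow] at this, 1, by simp, by simp⟩
  inv_mem' := by
    rintro a ⟨h1, g, hg, h⟩
    refine ⟨by rw [Units.val_inv_eq_inv_val]; exact h1.inv, g⁻¹, by rw [map_inv₀, hg], ?_⟩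
    rw [Units.val_inv_eq_inv_val, map_inv₀, ← mul_inv, h, inv_pow]

lemma S1_le : S.S1 ≤ SS K := fun _ h => h.1

lemma S2_le : S2 K ≤ S.S1 := by
  rintro a ⟨h1, r, β, h⟩
  refine ⟨h1, r * β * S.σ β, ?_, ?_⟩
  · rw [map_mul, map_mul, σσ]; simp; ring
  · rw [h, map_mul, map_pow]; simp; ring

lemma S3_le : S3 K ≤ S2 K := by
  rintro a ⟨β, h | h⟩
  · exact ⟨by rw [h]; exact InS.sq β, 1, β, by rw [h]; simp⟩
  · exact ⟨by rw [h]; exact (InS.sq β).neg, -1, β, by rw [h]; simp⟩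

lemma S1_idx : S.S1.relIndex (SS K) ∣ 2 := by
  apply relIndex_le_two
  intro a ha b hb ha' hb'
  obtain ⟨g, hg, -, h | h⟩ := S.main_S a.ne_zero ha
  · exact absurd ⟨ha, g, hg, h⟩ ha'
  obtain ⟨g', hg', -, h' | h'⟩ := S.main_S b.ne_zero hb
  · exact absurd ⟨hb, g', hg', h'⟩ hb'
  refine ⟨by rw [Units.val_mul]; exact InS.mul ha hb, 2 * g * g', ?_, ?_⟩
  · rw [map_mul, map_mul, hg, hg', map_ofNat]
  · rw [Units.val_mul, map_mul]; linear_combination (b : K) * S.σ b * h + 2 * g ^ 2 * h'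

lemma S2_idx : (S2 K).relIndex S.S1 ∣ 2 := by
  apply relIndex_le_two
  have aux : ∀ a : Kˣ, a ∈ S.S1 → a ∉ S2 K → ∃ (x y n : ℚ) (β : K),
      (a : K) = S.fl x y * β ^ 2 ∧ x ^ 2 - p * y ^ 2 = 2 * n ^ 2 := by
    rintro a ⟨ha, g, hg, h⟩ ha'
    obtain ⟨x, y, n, β, hβ, hn, h1, h2 | h2⟩ := S.main_S1 a.ne_zero ha hg h
    · exfalso
      have hf : S.fl x y ≠ 0 := by
        intro h0; rw [h0, zero_mul] at h1; exact a.ne_zero h1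
      obtain ⟨r, hr, x', y', h3⟩ := S.fl_rat_of_norm_sq h2 hf
      exact ha' ⟨ha, r, S.fl x' y' * β, by rw [h1, h3]; ring⟩
    · exact ⟨x, y, n, β, h1, h2⟩
  intro a ha b hb ha' hb'
  obtain ⟨x, y, n, β, h1, h2⟩ := aux a ha ha'
  obtain ⟨x', y', n', β', h1', h2'⟩ := aux b hb hb'
  have hab : ((a * b : Kˣ) : K) = S.fl (x * x' + p * y * y') (x * y' + y * x') * (β * β') ^ 2 := by
    rw [Units.val_mul, h1, h1', ← fl_mul]; ring
  have hf : S.fl (x * x' + p * y * y') (x * y' + y * x') ≠ 0 := by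
    intro h0; rw [h0, zero_mul] at hab; exact (a * b).ne_zero hab
  obtain ⟨r, hr, x'', y'', h3⟩ := S.fl_rat_of_norm_sq (n := 2 * n * n')
    (by linear_combination (x' ^ 2 - p * y' ^ 2) * h2 + 2 * n ^ 2 * h2') hf
  exact ⟨by rw [Units.val_mul]; exact InS.mul ha.1 hb.1, r, S.fl x'' y'' * (β * β'),
    by rw [hab, h3]; ring⟩

lemma S3_idx (S : Setup p K) : (S3 K).relIndex (S2 K) ∣ 2 := by
  apply relIndex_le_two
  have aux : ∀ a : Kˣ, a ∈ S2 K → a ∉ S3 K → ∃ γ : K, (a : K) = 2 * γ ^ 2 ∨ (a : K) = -(2 * γ ^ 2) := by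
    rintro a ⟨ha, r, β, h⟩ ha'
    obtain ⟨γ, -, h | h | h⟩ := S.main_S2 a.ne_zero ha h
    · exact absurd ⟨γ, Or.inl h⟩ ha'
    · exact absurd ⟨γ, Or.inr h⟩ ha'
    · exact ⟨γ, h⟩
  intro a ha b hb ha' hb'
  obtain ⟨γ, h⟩ := aux a ha ha'
  obtain ⟨γ', h'⟩ := aux b hb hb'
  refine ⟨2 * γ * γ', ?_⟩
  rw [Units.val_mul]
  rcases h with h | h <;> rcases h' with h' | h' <;> rw [h, h']
  · left; ring
  · right; ring
  · right; ring
  · left; ring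

lemma S3_SS (S : Setup p K) : (S3 K).relIndex (SS K) ∣ 8 := by
  rw [← Subgroup.relIndex_mul_relIndex _ _ _ (S3_le.trans S.S2_le) S.S1_le,
    ← Subgroup.relIndex_mul_relIndex _ _ _ S3_le S.S2_le]
  exact mul_dvd_mul (mul_dvd_mul S.S3_idx S.S2_idx) S.S1_idx

lemma EE_le : EE K ≤ SS K := by
  rintro _ ⟨u, rfl⟩
  refine ⟨1, one_ne_zero, u, ⊤, ?_, ?_⟩
  · simp
  · rw [Ideal.span_singleton_eq_top.2 u.isUnit, ← Ideal.one_eq_top, one_pow]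

lemma rank_ge (S : Setup p K) : 2 ≤ NumberField.Units.rank K := by
  have h1 := InfinitePlace.card_add_two_mul_card_eq_rank K
  have h2 := InfinitePlace.card_eq_nrRealPlaces_add_nrComplexPlaces K
  rw [S.finrank_eq] at h1
  have h3 : 0 < InfinitePlace.nrRealPlaces K := by
    have hr : ComplexEmbedding.IsReal ((Complex.ofRealHom).comp S.φ) := by
      ext x; simp
    have : Nonempty {w : InfinitePlace K // w.IsReal} := ⟨⟨InfinitePlace.mk _, ⟨_, hr, rfl⟩⟩⟩
    unfold InfinitePlace.nrRealPlaces
    classical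
    convert @Fintype.card_pos _ (Fintype.ofFinite _) this
  unfold Units.rank
  omega

lemma units_idx (S : Setup p K) : 4 ∣ (S3 K).relIndex (EE K) := by
  have hr := S.rank_ge
  unfold EE
  rw [← Subgroup.index_comap]
  obtain ⟨c, hc⟩ := @basis_hom _ _ _ _ (Units.basisModTorsion K)
    (⟨0, by omega⟩ : Fin (Units.rank K)) (⟨1, by omega⟩ : Fin (Units.rank K)) (by simp)
  let ψ : (𝓞 K)ˣ →* Multiplicative (ZMod 2 × ZMod 2) :=
    (AddMonoidHom.toMultiplicativeRight c).comp (QuotientGroup.mk' (Units.torsion K))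
  have hsurj : Function.Surjective ψ := by
    intro z
    obtain ⟨w, hw⟩ := hc (Multiplicative.toAdd z)
    obtain ⟨u, hu⟩ := QuotientGroup.mk'_surjective (Units.torsion K) (Additive.toMul w)
    refine ⟨u, ?_⟩
    show Multiplicative.ofAdd (c (Additive.ofMul (QuotientGroup.mk' (Units.torsion K) u))) = _
    rw [hu]
    exact congrArg Multiplicative.ofAdd hw
  have hker : ψ.ker.index = 4 := by
    rw [Subgroup.index_ker, MonoidHom.range_eq_top.2 hsurj]
    simp [Nat.card_prod]
  rw [← hker]
  apply Subgroup.index_dvd_of_le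
  have hsq : ∀ z : Multiplicative (ZMod 2 × ZMod 2), z ^ 2 = 1 := by decide
  have hneg : ψ (-1) = 1 := by
    have : QuotientGroup.mk' (Units.torsion K) (-1) = 1 := by
      rw [QuotientGroup.mk'_apply, QuotientGroup.eq_one_iff]
      exact (CommGroup.mem_torsion _).2 (isOfFinOrder_iff_pow_eq_one.2 ⟨2, by norm_num, by simp⟩)
    show (AddMonoidHom.toMultiplicativeRight c) (QuotientGroup.mk' (Units.torsion K) (-1)) = 1
    rw [this, map_one]
  have aux : ∀ (u : (𝓞 K)ˣ) (β : K), ((u : 𝓞 K) : K) = β ^ 2 → ψ u = 1 := by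
    intro u β h
    have hβ : IsIntegral ℤ β := by
      apply IsIntegral.of_pow (n := 2) (by norm_num)
      rw [← h]; exact (u : 𝓞 K).isIntegral_coe
    obtain ⟨y, rfl⟩ := exists_O hβ
    have hy : (u : 𝓞 K) = y ^ 2 := by
      apply RingOfIntegers.ext; rw [coeO_pow]; exact h
    have hyu : IsUnit y := by
      have : IsUnit (y ^ 2) := hy ▸ u.isUnit
      exact (isUnit_pow_iff two_ne_zero).1 this
    obtain ⟨v, rfl⟩ := hyu
    have : u = v ^ 2 := by ext; rw [hy]; simp
    rw [this, map_pow, hsq]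
  rintro u ⟨β, h⟩
  rw [MonoidHom.mem_ker]
  rcases h with h | h
  · exact aux u β h
  · have h1 : ψ (-u) = 1 := by
      apply aux (-u) β
      have h' : ((u : 𝓞 K) : K) = - β ^ 2 := h
      rw [Units.val_neg, coeO_neg, h', neg_neg]
    have : u = (-1) * (-u) := by simp
    rw [this, map_mul, hneg, h1, one_mul]

lemma W_idx (S : Setup p K) : (EE K ⊔ S3 K).relIndex (SS K) ∣ 2 := by
  have h1 := Subgroup.relIndex_mul_relIndex (S3 K) (EE K ⊔ S3 K) (SS K) le_sup_right
    (sup_le EE_le (S3_le.trans (S.S2_le.trans S.S1_le)))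
  rw [Subgroup.relIndex_sup_right] at h1
  have h2 := S.S3_SS
  rw [← h1] at h2
  have h3 := dvd_trans (mul_dvd_mul S.units_idx dvd_rfl) h2
  exact Nat.dvd_of_mul_dvd_mul_left (by norm_num : 0 < 4) h3

end Setup
end PQ



namespace PQ

lemma card_pow_two {G : Type*} [CommGroup G] [Fintype G] [DecidableEq G]
    (h : ∀ a b : G, a ^ 2 = 1 → b ^ 2 = 1 → a ≠ 1 → b ≠ 1 → a = b) (k : ℕ) :
    (Finset.univ.filter fun a : G => a ^ (2 ^ k) = 1).card ≤ 2 ^ k := by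
  induction k with
  | zero =>
    rw [pow_zero, Finset.card_le_one]
    intro a ha b hb
    simp only [Finset.mem_filter, pow_one] at ha hb
    rw [ha.2, hb.2]
  | succ k ih =>
    have h1 := Finset.card_le_mul_card_image (f := fun a : G => a ^ 2)
      (Finset.univ.filter fun a : G => a ^ (2 ^ (k + 1)) = 1) 2 (by
        intro b hb
        by_contra hcon
        rw [not_le] at hcon
        obtain ⟨x, y, z, hx, hy, hz, hxy, hxz, hyz⟩ := Finset.two_lt_card_iff.1 hcon
        simp only [Finset.mem_filter] at hx hy hz
        have e1 : (x⁻¹ * y) ^ 2 = 1 := by rw [mul_pow, inv_pow, hx.2, hy.2, inv_mul_cancel]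
        have e2 : (x⁻¹ * z) ^ 2 = 1 := by rw [mul_pow, inv_pow, hx.2, hz.2, inv_mul_cancel]
        have := h _ _ e1 e2 (by rw [Ne, inv_mul_eq_one]; exact hxy)
          (by rw [Ne, inv_mul_eq_one]; exact hxz)
        exact hyz (mul_left_cancel this))
    refine h1.trans ?_
    rw [pow_succ, mul_comm]
    refine Nat.mul_le_mul_right _ (le_trans (Finset.card_le_card ?_) ih)
    intro b hb
    obtain ⟨a, ha, rfl⟩ := Finset.mem_image.1 hb
    simp only [Finset.mem_filter, Finset.mem_univ, true_and] at ha ⊢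
    rw [← pow_mul, ← pow_succ']; exact ha

lemma cyclic_of_unique_invol {G : Type*} [CommGroup G] [Finite G] (hG : IsPGroup 2 G)
    (h : ∀ a b : G, a ^ 2 = 1 → b ^ 2 = 1 → a ≠ 1 → b ≠ 1 → a = b) : IsCyclic G := by
  classical
  have := Fintype.ofFinite G
  obtain ⟨m, hm⟩ := (IsPGroup.iff_card (p := 2)).1 hG
  apply isCyclic_of_card_pow_eq_one_le
  intro n hn
  obtain ⟨k, hk, hk'⟩ := (Nat.dvd_prime_pow Nat.prime_two).1 (Nat.gcd_dvd_right n (2 ^ m))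
  refine le_trans (le_trans (Finset.card_le_card ?_) (card_pow_two h k)) (hk' ▸ Nat.gcd_le_left _ hn)
  intro a ha
  simp only [Finset.mem_filter, Finset.mem_univ, true_and] at ha ⊢
  rw [← hk', ← orderOf_dvd_iff_pow_eq_one]
  refine Nat.dvd_gcd (orderOf_dvd_iff_pow_eq_one.2 ha) ?_
  rw [← hm]; exact orderOf_dvd_natCard a

namespace Setup

variable {p : ℕ} {K : Type*} [Field K] [NumberField K] (S : Setup p K)

lemma W_form {α : Kˣ} (h : α ∈ EE K ⊔ S3 K) :
    ∃ (u : (𝓞 K)ˣ) (β : K), (α : K) = ((u : 𝓞 K) : K) * β ^ 2 := by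
  obtain ⟨_, ⟨u, rfl⟩, b, ⟨β, hb⟩, rfl⟩ := Subgroup.mem_sup.1 h
  rw [Units.val_mul]
  rcases hb with hb | hb
  · exact ⟨u, β, by rw [hb]; rfl⟩
  · refine ⟨-u, β, ?_⟩
    rw [hb, Units.val_neg, coeO_neg, mul_neg, neg_mul]; rfl

lemma principal_of_W {I : Ideal (𝓞 K)} (hI : I ∈ nonZeroDivisors (Ideal (𝓞 K))) {x : 𝓞 K} (hx : I ^ 2 = Ideal.span {x})
    {α : Kˣ} (hα : (α : K) = x) (h : α ∈ EE K ⊔ S3 K) : ClassGroup.mk0 ⟨I, hI⟩ = 1 := by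
  obtain ⟨u, β, h⟩ := W_form h
  obtain ⟨D, hD, y, hy⟩ := exists_int_mult β
  have e : (D : 𝓞 K) ^ 2 * x = u * y ^ 2 := by
    apply RingOfIntegers.ext
    rw [coeO_mul, coeO_mul, coeO_pow, coeO_pow, coeO_int, ← hα, h, hy]; ring
  have e2 : (Ideal.span {(D : 𝓞 K)} * I) ^ 2 = (Ideal.span {y}) ^ 2 := by
    rw [mul_pow, hx, Ideal.span_singleton_pow, Ideal.span_singleton_mul_span_singleton, e,
      Ideal.span_singleton_pow, Ideal.span_singleton_mul_left_unit u.isUnit]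
  have e3 := ideal_sq_inj e2
  have hD' : (D : 𝓞 K) ≠ 0 := by exact_mod_cast hD
  have hI0 : I ≠ 0 := nonZeroDivisors.ne_zero hI
  have hy0 : y ≠ 0 := by
    rintro rfl
    rw [Ideal.span_singleton_zero] at e3
    rcases mul_eq_zero.1 (show Ideal.span {(D : 𝓞 K)} * I = 0 from e3) with h | h
    · exact hD' (Ideal.span_singleton_eq_bot.1 h)
    · exact hI0 h
  have : ClassGroup.mk0 ⟨I, hI⟩ = ClassGroup.mk0 (1 : nonZeroDivisors (Ideal (𝓞 K))) := by
    rw [ClassGroup.mk0_eq_mk0_iff]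
    refine ⟨D, y, hD', hy0, ?_⟩
    simpa using e3
  rw [this, map_one]

lemma exists_gen {c : ClassGroup (𝓞 K)} (h : c ^ 2 = 1) :
    ∃ (I : nonZeroDivisors (Ideal (𝓞 K))) (x : 𝓞 K) (α : Kˣ),
      c = ClassGroup.mk0 I ∧ (I : Ideal (𝓞 K)) ^ 2 = Ideal.span {x} ∧ (α : K) = x ∧ α ∈ SS K := by
  obtain ⟨I, rfl⟩ := ClassGroup.mk0_surjective c
  have h2 : ((I ^ 2 : nonZeroDivisors (Ideal (𝓞 K))) : Ideal (𝓞 K)).IsPrincipal := by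
    rw [← map_pow] at h
    exact (ClassGroup.mk0_eq_one_iff (I ^ 2).2).1 h
  obtain ⟨x, hx⟩ := h2
  have hx' : (I : Ideal (𝓞 K)) ^ 2 = Ideal.span {x} := by simpa using hx
  have hx0 : x ≠ 0 := by
    rintro rfl
    rw [Ideal.span_singleton_zero] at hx'
    have : (I : Ideal (𝓞 K)) ^ 2 = 0 := hx'
    exact nonZeroDivisors.ne_zero I.2 (pow_eq_zero_iff two_ne_zero |>.1 this)
  have hx1 : (x : K) ≠ 0 := RingOfIntegers.coe_ne_zero_iff.2 hx0
  refine ⟨I, x, Units.mk0 (x : K) hx1, rfl, hx', rfl, ?_⟩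
  exact ⟨1, one_ne_zero, x, I, by simp, hx'.symm⟩

lemma unique_invol (S : Setup p K) (a b : ClassGroup (𝓞 K)) (ha : a ^ 2 = 1) (hb : b ^ 2 = 1)
    (ha1 : a ≠ 1) (hb1 : b ≠ 1) : a = b := by
  obtain ⟨I, x, α, hI, hx, hα, hα'⟩ := exists_gen ha
  obtain ⟨J, y, β, hJ, hy, hβ, hβ'⟩ := exists_gen hb
  have h1 : α ∉ EE K ⊔ S3 K := fun h => ha1 (by rw [hI]; exact principal_of_W I.2 hx hα h)
  have h2 : β ∉ EE K ⊔ S3 K := fun h => hb1 (by rw [hJ]; exact principal_of_W J.2 hy hβ h)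
  have h3 := mul_mem_of_relIndex_dvd_two S.W_idx hα' hβ' h1 h2
  have h4 : ClassGroup.mk0 (I * J) = 1 :=
    principal_of_W (I * J).2 (x := x * y)
      (by rw [← Ideal.span_singleton_mul_span_singleton, ← hx, ← hy, ← mul_pow]; rfl)
      (by rw [Units.val_mul, hα, hβ, coeO_mul]) h3
  rw [map_mul, ← hI, ← hJ] at h4
  rw [pow_two] at hb
  rw [eq_inv_of_mul_eq_one_left h4]
  exact (eq_inv_of_mul_eq_one_left hb).symm

lemma sylow_cyclic (S : Setup p K) (P : Sylow 2 (ClassGroup (𝓞 K))) : IsCyclic P := by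
  apply cyclic_of_unique_invol P.2
  intro a b ha hb ha1 hb1
  apply Subtype.ext
  apply S.unique_invol
  · exact_mod_cast congrArg Subtype.val ha
  · exact_mod_cast congrArg Subtype.val hb
  · exact fun h => ha1 (Subtype.ext h)
  · exact fun h => hb1 (Subtype.ext h)

end Setup
end PQ



namespace PQ

lemma exists_fourth_root {p : ℕ} (hp : p.Prime) (hmod : p % 16 = 15) :
    ∃ (q : ℕ) (a : ℤ), q.Prime ∧ q % 8 = 3 ∧ q ≠ p ∧ (q : ℤ) ∣ a ^ 4 - p ∧ ¬ (q : ℤ) ∣ a := by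
  have hc : Nat.Coprime 8 p := by
    rw [show 8 = 2 ^ 3 by norm_num]
    apply Nat.Coprime.pow_left
    rw [Nat.coprime_primes Nat.prime_two hp]
    omega
  obtain ⟨k, hk1, hk2⟩ := Nat.chineseRemainder hc 3 (p - 1)
  have hp1 := hp.one_lt
  have hkc : k.Coprime (8 * p) := by
    apply Nat.Coprime.mul_right
    · unfold Nat.Coprime
      rw [hk1.gcd_eq]; norm_num
    · unfold Nat.Coprime
      rw [hk2.gcd_eq]
      exact (Nat.coprime_self_sub_left hp1.le).2 (Nat.coprime_one_left p)
  obtain ⟨q, hqp, hq, hqk⟩ := Nat.forall_exists_prime_gt_and_modEq p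
    (q := 8 * p) (a := k) (by positivity) hkc
  have hq8 : q ≡ 3 [MOD 8] := (hqk.of_dvd (dvd_mul_right _ _)).trans hk1
  have hqp' : q ≡ p - 1 [MOD p] := (hqk.of_dvd (dvd_mul_left _ _)).trans hk2
  have hq8' : q % 8 = 3 := hq8
  have : Fact p.Prime := ⟨hp⟩
  have : Fact q.Prime := ⟨hq⟩
  have h1 : (q : ZMod p) = -1 := by
    rw [(ZMod.natCast_eq_natCast_iff _ _ _).2 hqp', Nat.cast_sub hp1.le]; simp
  have h2 : IsSquare (p : ZMod q) := by
    by_contra hcon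
    rw [← ZMod.exists_sq_eq_prime_iff_of_mod_four_eq_three (by omega) (by omega) (by omega), h1,
      ZMod.exists_sq_eq_neg_one_iff] at hcon
    omega
  have hp0 : (p : ZMod q) ≠ 0 := by
    rw [Ne, ZMod.natCast_eq_zero_iff]
    intro h
    have := (Nat.prime_dvd_prime_iff_eq hq hp).1 h
    omega
  obtain ⟨b, hb⟩ := h2
  have hb0 : b ≠ 0 := by rintro rfl; simp at hb; exact hp0 hb
  have h3 : IsSquare b ∨ IsSquare (-b) := by
    rcases quadraticChar_dichotomy hb0 with h | h
    · exact Or.inl ((quadraticChar_one_iff_isSquare hb0).1 h)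
    · right
      rw [← quadraticChar_one_iff_isSquare (neg_ne_zero.2 hb0), neg_eq_neg_one_mul, map_mul, h]
      have hn : ¬ IsSquare (-1 : ZMod q) := by
        rw [ZMod.exists_sq_eq_neg_one_iff]; omega
      have hne : (-1 : ZMod q) ≠ 0 := by simp
      rcases quadraticChar_dichotomy hne with h | h
      · exact absurd ((quadraticChar_one_iff_isSquare hne).1 h) hn
      · rw [h]; norm_num
  have h4 : ∃ c : ZMod q, c ^ 4 = p := by
    rcases h3 with ⟨c, h⟩ | ⟨c, h⟩
    · exact ⟨c, by rw [hb, h]; ring⟩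
    · exact ⟨c, by rw [hb]; linear_combination (b - c * c) * h⟩
  obtain ⟨c, hc⟩ := h4
  obtain ⟨a, rfl⟩ := ZMod.intCast_surjective c
  refine ⟨q, a, hq, hq8', by omega, ?_, ?_⟩
  · rw [← ZMod.intCast_zmod_eq_zero_iff_dvd]; push_cast; rw [hc, sub_self]
  · rw [← ZMod.intCast_zmod_eq_zero_iff_dvd]
    intro h
    rw [h] at hc; simp at hc; exact hp0 hc.symm

namespace Setup

variable {p : ℕ} {K : Type*} [Field K] [NumberField K] (S : Setup p K)

/-- The prime ideal above `q` containing `θ - a`. -/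
def QQ (q : ℕ) (a : ℤ) : Ideal (𝓞 K) := Ideal.span {(q : 𝓞 K)} ⊔ Ideal.span {S.θO - (a : 𝓞 K)}

lemma q_mem (q : ℕ) (a : ℤ) : (q : 𝓞 K) ∈ S.QQ q a :=
  Ideal.mem_sup_left (Ideal.mem_span_singleton_self _)

lemma θ_mem (q : ℕ) (a : ℤ) : S.θO - (a : 𝓞 K) ∈ S.QQ q a :=
  Ideal.mem_sup_right (Ideal.mem_span_singleton_self _)

lemma int_coordsO (x : 𝓞 K) : ∃ a b c d : ℤ, 4 * p * (x : K) = S.el a b c d ∧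
    4 * (p : 𝓞 K) * x = a + b * S.θO + c * S.θO ^ 2 + d * S.θO ^ 3 := by
  obtain ⟨a, b, c, d, h⟩ := S.int_coords (x := (x : K)) x.isIntegral_coe
  refine ⟨a, b, c, d, h, ?_⟩
  apply RingOfIntegers.ext
  have e : ((4 * (p : 𝓞 K) * x : 𝓞 K) : K) = 4 * p * (x : K) := by
    rw [coeO_mul, coeO_mul, coeO_nat]; rfl
  rw [e, h]
  simp only [coeO_add, coeO_mul, coeO_int, coeO_pow]
  unfold el
  simp only [Rat.cast_intCast]
  rfl

lemma QQ_ne_top {q : ℕ} {a : ℤ} (hq : q.Prime) (hq8 : q % 8 = 3) (hqp : q ≠ p)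
    (ha : (q : ℤ) ∣ a ^ 4 - p) : S.QQ q a ≠ ⊤ := by
  intro h
  rw [Ideal.eq_top_iff_one] at h
  obtain ⟨y, hy, z, hz, h⟩ := Submodule.mem_sup.1 h
  obtain ⟨x, rfl⟩ := Ideal.mem_span_singleton'.1 hy
  obtain ⟨w, rfl⟩ := Ideal.mem_span_singleton'.1 hz
  obtain ⟨x0, x1, x2, x3, hx, -⟩ := S.int_coordsO x
  obtain ⟨y0, y1, y2, y3, hy, -⟩ := S.int_coordsO w
  have h' : (x : K) * q + w * (S.θ - a) = 1 := by
    have := congrArg (fun t : 𝓞 K => (t : K)) h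
    simp only [coeO_add, coeO_mul, coeO_sub, coeO_nat, coeO_int, coeO_one] at this
    exact this
  have e1 : (q : K) = S.el q 0 0 0 := by rw [el_rat]; simp
  have e2 : S.θ - (a : K) = S.el (-a) 1 0 0 := by simp [el]; ring
  have h2 : S.el x0 x1 x2 x3 * S.el q 0 0 0 + S.el y0 y1 y2 y3 * S.el (-a) 1 0 0 =
      S.el (4 * p) 0 0 0 := by
    rw [← hx, ← hy, ← e1, ← e2, el_rat]
    push_cast
    linear_combination (4 * (p : K)) * h'
  rw [el_mul, el_mul, el_add] at h2
  obtain ⟨g0, g1, g2, g3⟩ := S.el_inj h2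
  obtain ⟨t, ht⟩ := ha
  have key : (4 * p : ℤ) = q * (x0 + a * x1 + a ^ 2 * x2 + a ^ 3 * x3 - t * y3) := by
    have ht' : (a : ℚ) ^ 4 - p = q * t := by exact_mod_cast ht
    have : (4 * p : ℚ) = q * (x0 + a * x1 + a ^ 2 * x2 + a ^ 3 * x3 - t * y3) := by
      linear_combination -g0 - a * g1 - a ^ 2 * g2 - a ^ 3 * g3 - y3 * ht'
    exact_mod_cast this
  have hd : (q : ℤ) ∣ ((4 * p : ℕ) : ℤ) := by
    push_cast; exact ⟨_, key⟩
  rw [Int.natCast_dvd_natCast, hq.dvd_mul] at hd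
  rcases hd with hd | hd
  · have := Nat.le_of_dvd (by norm_num) hd
    have h3 : q = 3 := by omega
    rw [h3] at hd; omega
  · exact hqp ((Nat.prime_dvd_prime_iff_eq hq S.hp).1 hd)

lemma QQ_norm {q : ℕ} {a : ℤ} (hq : q.Prime) (hq8 : q % 8 = 3) (hqp : q ≠ p)
    (ha : (q : ℤ) ∣ a ^ 4 - p) : Ideal.absNorm (S.QQ q a) = q := by
  have h1 : Ideal.absNorm (S.QQ q a) ∣ q := by
    rw [Ideal.absNorm_apply, Submodule.cardQuot_apply]
    have hz : (Int.castAddHom (𝓞 K ⧸ S.QQ q a)) (q : ℤ) = 0 := by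
      simp only [Int.coe_castAddHom, Int.cast_natCast]
      rw [← map_natCast (Ideal.Quotient.mk (S.QQ q a)), Ideal.Quotient.eq_zero_iff_mem]
      exact S.q_mem q a
    have := AddSubgroup.card_dvd_of_surjective (ZMod.lift q ⟨Int.castAddHom (𝓞 K ⧸ S.QQ q a), hz⟩) ?_
    · rwa [Nat.card_zmod] at this
    intro z
    obtain ⟨x, rfl⟩ := Ideal.Quotient.mk_surjective z
    obtain ⟨x0, x1, x2, x3, -, hx⟩ := S.int_coordsO x
    have hcop : IsCoprime (4 * p : ℤ) (q : ℤ) := by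
      have h2 : Nat.Coprime (4 * p) q := by
        apply Nat.Coprime.mul_left
        · rw [show 4 = 2 ^ 2 by norm_num]
          apply Nat.Coprime.pow_left
          rw [Nat.coprime_primes Nat.prime_two hq]; omega
        · rw [Nat.coprime_primes S.hp hq]; exact hqp.symm
      have := Nat.isCoprime_iff_coprime.2 h2
      push_cast at this; exact this
    obtain ⟨u, v, huv⟩ := hcop
    refine ⟨((u * (x0 + x1 * a + x2 * a ^ 2 + x3 * a ^ 3) : ℤ) : ZMod q), ?_⟩
    rw [ZMod.lift_coe]
    simp only [Int.coe_castAddHom]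
    rw [← map_intCast (Ideal.Quotient.mk (S.QQ q a)), Ideal.Quotient.mk_eq_mk_iff_sub_mem]
    have hθ : Ideal.Quotient.mk (S.QQ q a) S.θO = Ideal.Quotient.mk (S.QQ q a) (a : 𝓞 K) := by
      rw [Ideal.Quotient.mk_eq_mk_iff_sub_mem]; exact S.θ_mem q a
    rw [← Ideal.Quotient.mk_eq_mk_iff_sub_mem]
    have hq0 : (Ideal.Quotient.mk (S.QQ q a)) (q : 𝓞 K) = 0 := by
      rw [Ideal.Quotient.eq_zero_iff_mem]; exact S.q_mem q a
    have e1 := congrArg (Ideal.Quotient.mk (S.QQ q a)) hx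
    have e2 := congrArg (fun n : ℤ => Ideal.Quotient.mk (S.QQ q a) (n : 𝓞 K)) huv
    simp only [map_mul, map_add, map_pow, hθ, map_natCast, map_intCast, map_ofNat, Int.cast_add,
      Int.cast_mul, Int.cast_pow, Int.cast_natCast, Int.cast_ofNat, Int.cast_one, map_one] at e1 e2 hq0 ⊢
    linear_combination (-(u : 𝓞 K ⧸ S.QQ q a)) * e1 + Ideal.Quotient.mk (S.QQ q a) x * e2 -
      v * Ideal.Quotient.mk (S.QQ q a) x * hq0
  rcases (Nat.dvd_prime hq).1 h1 with h | h
  · exact absurd (Ideal.absNorm_eq_one_iff.1 h) (S.QQ_ne_top hq hq8 hqp ha)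
  · exact h

lemma QQ_coprime {q : ℕ} {a : ℤ} (hq : q.Prime) (hq8 : q % 8 = 3) (ha : ¬ (q : ℤ) ∣ a) :
    IsCoprime (S.QQ q a) ((S.QQ q a).map (S.τ : 𝓞 K →+* 𝓞 K)) := by
  rw [Ideal.isCoprime_iff_add, Ideal.one_eq_top, Ideal.eq_top_iff_one]
  have h1 : S.θO - (a : 𝓞 K) ∈ S.QQ q a + ((S.QQ q a).map (S.τ : 𝓞 K →+* 𝓞 K)) :=
    Ideal.mem_sup_left (S.θ_mem q a)
  have h2 : (q : 𝓞 K) ∈ S.QQ q a + ((S.QQ q a).map (S.τ : 𝓞 K →+* 𝓞 K)) :=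
    Ideal.mem_sup_left (S.q_mem q a)
  have h3 : -S.θO - (a : 𝓞 K) ∈ S.QQ q a + ((S.QQ q a).map (S.τ : 𝓞 K →+* 𝓞 K)) := by
    apply Ideal.mem_sup_right
    have := Ideal.mem_map_of_mem (S.τ : 𝓞 K →+* 𝓞 K) (S.θ_mem q a)
    simpa [S.τθ] using this
  have hcop : IsCoprime (2 * a) (q : ℤ) := by
    apply IsCoprime.mul_left
    · rw [show (2 : ℤ) = ((2 : ℕ) : ℤ) by norm_num, Nat.isCoprime_iff_coprime,
        Nat.coprime_primes Nat.prime_two hq]; omega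
    · exact ((Nat.prime_iff_prime_int.1 hq).coprime_iff_not_dvd.2 ha).symm
  obtain ⟨u, v, huv⟩ := hcop
  have e : (1 : 𝓞 K) = (-u : 𝓞 K) * ((S.θO - a) + (-S.θO - a)) + v * q := by
    have := congrArg (fun n : ℤ => (n : 𝓞 K)) huv
    push_cast at this
    linear_combination -this
  rw [e]
  exact Ideal.add_mem _ (Ideal.mul_mem_left _ _ (Ideal.add_mem _ h1 h3)) (Ideal.mul_mem_left _ _ h2)

end Setup
end PQ



namespace PQ
namespace Setup

variable {p : ℕ} {K : Type*} [Field K] [NumberField K] (S : Setup p K)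

lemma case_one {α : 𝓞 K} {g : K} {q m : ℕ} (hq8 : q % 8 = 3) (hm : m % 2 = 1)
    (h0 : (α : K) ≠ 0) (h : InS (α : K))
    (hn : |Algebra.norm ℚ (α : K)| = (q : ℚ) ^ (2 * m)) (hg : S.σ g = g)
    (hαg : (α : K) * S.σ α = g ^ 2) : False := by
  obtain ⟨a, c, n, β, hβ, hn0, h1, h2⟩ := S.main_S1 h0 h hg hαg
  rw [h1, map_mul, map_pow, norm_fl] at hn
  have e : |(a ^ 2 - p * c ^ 2) * Algebra.norm ℚ β| = (q : ℚ) ^ m := by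
    have h3 : |(a ^ 2 - p * c ^ 2) * Algebra.norm ℚ β| ^ 2 = ((q : ℚ) ^ m) ^ 2 := by
      rw [← pow_mul, mul_comm m 2, ← hn, ← mul_pow, ← abs_pow]
    exact (pow_left_inj₀ (abs_nonneg _) (by positivity) two_ne_zero).1 h3
  have e2 := congrArg XQ e
  rw [XQ_abs, XQ_mul, S.XQ_norm hβ, XQ_pow, show (q : ℚ) = ((q : ℤ) : ℚ) by simp, XQ_int,
    X_neg_one_of (n := q) (by omega), (Nat.odd_iff.2 hm).neg_one_pow] at e2
  have e3 : XQ (a ^ 2 - p * c ^ 2) = 1 := by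
    have h4 : XQ (n ^ 2) = 1 := by rw [pow_two, XQ_mul, XQ_sq hn0]
    rcases h2 with h2 | h2 <;> rw [h2]
    · exact h4
    · rw [XQ_mul, h4, show (2 : ℚ) = ((2 : ℤ) : ℚ) by norm_num, XQ_int, X_two]; norm_num
  rw [e3] at e2
  norm_num at e2

lemma case_two {α A B : 𝓞 K} {g : K} {q m : ℕ} (hq : q.Prime) (hq8 : q % 8 = 3) (hm : m % 2 = 1)
    (hn : |Algebra.norm ℚ (α : K)| = (q : ℚ) ^ (2 * m)) (hg : S.σ g = g)
    (hαg : (α : K) * S.σ α = 2 * g ^ 2) (hAB : A * α + B * S.τ α = 1) : False := by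
  -- integrality of `2 g`
  have hgi : IsIntegral ℤ (2 * g) := by
    apply IsIntegral.of_pow (n := 2) (by norm_num)
    have e : (2 * g) ^ 2 = ((2 * (α * S.τ α) : 𝓞 K) : K) := by
      rw [coeO_mul, coeO_mul, τ_coe, hαg]
      show _ = (2 : K) * _
      ring
    rw [e]; exact (2 * (α * S.τ α) : 𝓞 K).isIntegral_coe
  obtain ⟨e, g1, f, g3, hgc⟩ := S.int_coords hgi
  obtain ⟨a, c, b, d, hα, -⟩ := S.int_coordsO α
  obtain ⟨x0, x1, x2, x3, hA, -⟩ := S.int_coordsO A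
  obtain ⟨y0, y1, y2, y3, hB, -⟩ := S.int_coordsO B
  -- `g` has no odd part
  have hgc' : 4 * p * (2 * g) = S.fl e f := by
    have h1 : S.σ (4 * p * (2 * g)) = 4 * p * (2 * g) := by
      simp only [map_mul, map_ofNat, map_natCast, hg]
    rw [hgc, σ_el] at h1
    obtain ⟨-, h2, -, h3⟩ := S.el_inj h1
    have h4 : (g1 : ℚ) = 0 := by linarith
    have h5 : (g3 : ℚ) = 0 := by linarith
    rw [hgc, h4, h5]; rfl
  have hα2 : 8 * p * (α : K) = S.el (2 * a) (2 * c) (2 * b) (2 * d) := by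
    have : (8 * p * (α : K)) = S.el 2 0 0 0 * (4 * p * α) := by
      rw [el_rat]; push_cast; ring
    rw [this, hα, el_mul]; congr 1 <;> ring
  have hσα2 : 8 * p * (S.σ α : K) = S.el (2 * a) (-(2 * c)) (2 * b) (-(2 * d)) := by
    rw [← σ_el, ← hα2]; simp only [map_mul, map_ofNat, map_natCast]
  -- the norm equation
  have hE : S.el (2 * a) (2 * c) (2 * b) (2 * d) * S.el (2 * a) (-(2 * c)) (2 * b) (-(2 * d)) =
      S.el 2 0 0 0 * (S.el e 0 f 0 * S.el e 0 f 0) := by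
    rw [← hα2, ← hσα2, show S.el e 0 f 0 = S.fl e f from rfl, ← hgc', el_rat]
    push_cast
    linear_combination (64 * (p : K) ^ 2) * hαg
  rw [el_mul, el_mul, el_mul] at hE
  obtain ⟨E0, -, E2, -⟩ := S.el_inj hE
  have h1 : (2 * a)^2 + p * (2 * b)^2 - 2 * p * (2 * c) * (2 * d) = 2 * (e^2 + p * f^2) := by
    have : ((2 * a)^2 + p * (2 * b)^2 - 2 * p * (2 * c) * (2 * d) : ℚ) = 2 * (e^2 + p * f^2) := by
      linear_combination E0
    exact_mod_cast this
  have h2 : 2 * (2 * a) * (2 * b) - (2 * c)^2 - p * (2 * d)^2 = 4 * e * f := by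
    have : (2 * (2 * a) * (2 * b) - (2 * c)^2 - p * (2 * d)^2 : ℚ) = 4 * e * f := by
      linear_combination E2
    exact_mod_cast this
  -- the coprimality equation
  have hAB' : (A : K) * α + B * S.σ α = 1 := by
    have := congrArg (fun t : 𝓞 K => (t : K)) hAB
    simp only [coeO_add, coeO_mul, τ_coe, coeO_one] at this
    exact this
  have hC : S.el x0 x1 x2 x3 * S.el (2 * a) (2 * c) (2 * b) (2 * d) +
      S.el y0 y1 y2 y3 * S.el (2 * a) (-(2 * c)) (2 * b) (-(2 * d)) = S.el (2 ^ 5 * p ^ 2) 0 0 0 := by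
    rw [← hα2, ← hσα2, ← hA, ← hB, el_rat]
    push_cast
    linear_combination (32 * (p : K) ^ 2) * hAB'
  rw [el_mul, el_mul, el_add] at hC
  obtain ⟨C0, -, C2, -⟩ := S.el_inj hC
  have h3 : (x0 + y0) * (2 * a) + p * (x2 + y2) * (2 * b) + (p * (x3 - y3)) * (2 * c) +
      p * (x1 - y1) * (2 * d) = 2 ^ 5 * p ^ 2 := by
    have : ((x0 + y0) * (2 * a) + p * (x2 + y2) * (2 * b) + (p * (x3 - y3)) * (2 * c) +
      p * (x1 - y1) * (2 * d) : ℚ) = 2 ^ 5 * p ^ 2 := by linear_combination C0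
    exact_mod_cast this
  have h4 : (x0 + y0) * (2 * b) + (x2 + y2) * (2 * a) + (p * (x3 - y3)) * (2 * d) +
      (x1 - y1) * (2 * c) = 0 := by
    have : ((x0 + y0) * (2 * b) + (x2 + y2) * (2 * a) + (p * (x3 - y3)) * (2 * d) +
      (x1 - y1) * (2 * c) : ℚ) = 0 := by linear_combination C2
    exact_mod_cast this
  have hpK : (p : K) ≠ 0 := by exact_mod_cast S.hp.ne_zero
  have hm0 : m ≠ 0 := by omega
  -- the odd part does not vanish
  have hv : S.fl (2 * c) (2 * d) ≠ 0 := by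
    intro h0
    rw [← fl_zero] at h0
    obtain ⟨hc, hd⟩ := S.fl_inj h0
    rw [hc, hd] at hα2 hσα2
    rw [neg_zero, ← hα2] at hσα2
    have hs : S.σ (α : K) = α := mul_left_cancel₀ (by simp [hpK]) hσα2
    have hu : IsUnit α := by
      apply IsUnit.of_mul_eq_one (A + B)
      apply RingOfIntegers.ext
      rw [coeO_mul, coeO_add, coeO_one, ← hAB', hs]; ring
    have := absNorm_cast α
    rw [Ideal.span_singleton_eq_top.2 hu, Ideal.absNorm_top, hn] at this
    have h6 : (1 : ℕ) = q ^ (2 * m) := by exact_mod_cast this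
    have h7 := Nat.one_lt_pow (n := 2 * m) (by omega) hq.one_lt
    omega
  have hne : (2 * c) ^ 2 - p * (2 * d) ^ 2 ≠ 0 := by
    have := S.fl_nF hv
    exact_mod_cast this
  have r1 := claim1 S.hp S.hmod (2 * a) (2 * b) (2 * c) (2 * d) e f (x0 + y0) (x2 + y2)
    (p * (x3 - y3)) (x1 - y1) 5 2 h1 h2 h3 h4 hne
  -- the norm of `g`
  have hN : |e ^ 2 - p * f ^ 2| = 2 ^ 5 * p ^ 2 * q ^ m := by
    have n1 := congrArg (Algebra.norm ℚ) hαg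
    have n2 : Algebra.norm ℚ (S.σ (α : K)) = Algebra.norm ℚ (α : K) := Algebra.norm_eq_of_algEquiv S.σ _
    rw [map_mul, n2, map_mul, map_pow, show (2 : K) = ((2 : ℤ) : K) by norm_num, S.norm_int] at n1
    have n3 := congrArg (Algebra.norm ℚ) hgc'
    rw [show 4 * (p : K) * (2 * g) = ((8 * p : ℤ) : K) * g by push_cast; ring, map_mul, S.norm_int,
      norm_fl] at n3
    push_cast at n1 n3
    have n4 : (2 * |(e : ℚ) ^ 2 - p * f ^ 2|) ^ 4 = (64 * p ^ 2 * q ^ m) ^ 4 := by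
      have n5 : |Algebra.norm ℚ (α : K)| ^ 2 = 16 * Algebra.norm ℚ g ^ 2 := by
        rw [sq_abs, pow_two, n1]; norm_num
      rw [hn] at n5
      have n6 : |(e : ℚ) ^ 2 - p * f ^ 2| ^ 4 = ((8 * p) ^ 4 * Algebra.norm ℚ g) ^ 2 := by
        rw [n3, ← pow_mul, ← abs_pow, abs_of_nonneg (by positivity)]
      rw [mul_pow, n6]
      calc _ = (8 * (p : ℚ)) ^ 8 * (16 * Algebra.norm ℚ g ^ 2) := by ring
        _ = _ := by rw [← n5]; ring
    have n7 := (pow_left_inj₀ (by positivity) (by positivity) (by norm_num : (4 : ℕ) ≠ 0)).1 n4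
    have n8 : |(e : ℚ) ^ 2 - p * f ^ 2| = 2 ^ 5 * p ^ 2 * q ^ m := by linarith
    exact_mod_cast n8
  have hN0 : e ^ 2 - p * f ^ 2 ≠ 0 := by
    intro h0
    rw [h0, abs_zero] at hN
    have hp' := S.hp.pos
    have hq' := hq.pos
    have : (0 : ℤ) < 2 ^ 5 * p ^ 2 * q ^ m := by positivity
    omega
  obtain ⟨k, l, hl, hkl⟩ := exists_two_pow_odd hN0
  have r2 := claim2 S.hmodZ k (2 * a) (2 * b) (2 * c) (2 * d) e f l hl hkl h1 h2
  rw [r1] at r2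
  have r3 : X (2 ^ 5 * p ^ 2 * q ^ m) = -1 := by
    rw [X_mul, X_mul, X_pow, X_two, X_sq' (by exact_mod_cast S.hp.ne_zero), X_pow,
      X_neg_one_of (n := q) (by omega), (Nat.odd_iff.2 hm).neg_one_pow]; norm_num
  rw [← hN] at r3
  rcases abs_choice (e ^ 2 - p * f ^ 2) with h | h <;> rw [h] at r3
  · omega
  · rw [X_neg] at r3; omega

lemma principal_pow (I : nonZeroDivisors (Ideal (𝓞 K))) (n : ℕ) (h : ClassGroup.mk0 I ^ n = 1) :
    ((I : Ideal (𝓞 K)) ^ n).IsPrincipal := by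
  rw [← map_pow] at h
  have h2 : ((I ^ n : nonZeroDivisors (Ideal (𝓞 K))) : Ideal (𝓞 K)).IsPrincipal :=
    (ClassGroup.mk0_eq_one_iff (I ^ n).2).1 h
  rwa [SubmonoidClass.coe_pow] at h2

lemma four_dvd (S : Setup p K) : 4 ∣ classNumber K := by
  by_contra hcon
  obtain ⟨q, a, hq, hq8, hqp, ha, ha'⟩ := exists_fourth_root S.hp S.hmod
  obtain ⟨m, hm, hdvd⟩ : ∃ m, m % 2 = 1 ∧ classNumber K ∣ 2 * m := by
    rcases Nat.even_or_odd' (classNumber K) with ⟨k, hk | hk⟩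
    · exact ⟨k, by omega, by rw [hk]⟩
    · exact ⟨classNumber K, by omega, dvd_mul_left _ _⟩
  have hQn := S.QQ_norm hq hq8 hqp ha
  have hQ0 : S.QQ q a ≠ 0 := by
    intro h
    rw [h, Ideal.zero_eq_bot, Ideal.absNorm_bot] at hQn
    exact hq.ne_zero hQn.symm
  have hQ1 : S.QQ q a ∈ nonZeroDivisors (Ideal (𝓞 K)) := mem_nonZeroDivisors_of_ne_zero hQ0
  have hpr : (S.QQ q a ^ (2 * m)).IsPrincipal := by
    have h1 : (ClassGroup.mk0 ⟨S.QQ q a, hQ1⟩) ^ (2 * m) = 1 := by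
      obtain ⟨t, ht⟩ := hdvd
      rw [ht, pow_mul]
      unfold classNumber
      rw [pow_card_eq_one, one_pow]
    exact principal_pow _ _ h1
  obtain ⟨α, hα⟩ := hpr
  have hα' : S.QQ q a ^ (2 * m) = Ideal.span {α} := hα
  have hn : |Algebra.norm ℚ (α : K)| = (q : ℚ) ^ (2 * m) := by
    rw [← absNorm_cast, ← hα', map_pow, hQn]; push_cast; rfl
  have h0 : (α : K) ≠ 0 := by
    intro h
    rw [h, Algebra.norm_zero, abs_zero] at hn
    exact pow_ne_zero (2 * m) (by exact_mod_cast hq.ne_zero : (q : ℚ) ≠ 0) hn.symm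
  have hS : InS (α : K) := by
    refine ⟨1, one_ne_zero, α, S.QQ q a ^ m, by simp, ?_⟩
    rw [← hα', ← pow_mul, mul_comm]
  have hcop : IsCoprime α (S.τ α) := by
    rw [← Ideal.isCoprime_span_singleton_iff]
    have := (S.QQ_coprime hq hq8 ha').pow (m := 2 * m) (n := 2 * m)
    rw [← Ideal.map_pow, hα', Ideal.map_span, Set.image_singleton] at this
    exact this
  obtain ⟨A, B, hAB⟩ := hcop
  obtain ⟨g, hg, -, h | h⟩ := S.main_S h0 hS
  · exact S.case_one hq8 hm h0 hS hn hg h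
  · exact S.case_two hq hq8 hm hn hg h hAB

end Setup
end PQ




lemma PQ_exists_setup (p : ℕ) (hp : p.Prime) (hmod : p % 16 = 15)
    (K : Type*) [Field K] [NumberField K]
    (e : K ≃ₐ[ℚ] AdjoinRoot (X ^ 4 - C (p : ℚ))) : Nonempty (PQ.Setup p K) := by
  have hmon : (X ^ 4 - C (p : ℚ)).Monic := monic_X_pow_sub_C _ (by norm_num)
  have hdeg : (X ^ 4 - C (p : ℚ)).natDegree = 4 := natDegree_X_pow_sub_C
  let pb := AdjoinRoot.powerBasis' hmon
  have hdim : pb.dim = 4 := by rw [AdjoinRoot.powerBasis'_dim, hdeg]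
  let r := AdjoinRoot.root (X ^ 4 - C (p : ℚ))
  have hr : r ^ 4 = algebraMap ℚ _ (p : ℚ) := by
    have h := AdjoinRoot.eval₂_root (X ^ 4 - C (p : ℚ))
    rw [eval₂_sub, eval₂_pow, eval₂_X, eval₂_C, sub_eq_zero] at h
    exact h
  let θ : K := e.symm r
  have hθ : θ ^ 4 = p := by
    show e.symm r ^ 4 = _
    rw [← map_pow, hr, AlgEquiv.commutes]; simp
  let bas : Module.Basis (Fin 4) ℚ K := (pb.basis.reindex (finCongr hdim)).map e.symm.toLinearEquiv
  have hbas : ∀ i, bas i = θ ^ (i : ℕ) := by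
    intro i
    have hg : pb.gen = r := AdjoinRoot.powerBasis'_gen hmon
    simp [bas, θ, hg]
  let s0 : AdjoinRoot (X ^ 4 - C (p : ℚ)) →ₐ[ℚ] K :=
    AdjoinRoot.liftAlgHom (X ^ 4 - C (p : ℚ)) (Algebra.ofId ℚ K) (-θ) (by
      simp only [eval₂_sub, eval₂_pow, eval₂_X, eval₂_C]
      rw [Even.neg_pow (by decide), hθ]; simp)
  have hs0 : s0 r = -θ := AdjoinRoot.liftAlgHom_root ..
  let s1 : K →ₐ[ℚ] K := s0.comp e.toAlgHom
  have hs1 : s1 θ = -θ := by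
    show s0 (e (e.symm r)) = _
    rw [AlgEquiv.apply_symm_apply, hs0]
  have hbij : Function.Bijective s1 := by
    have : FiniteDimensional ℚ K := inferInstance
    exact Algebra.IsAlgebraic.algHom_bijective s1
  let ρ : AdjoinRoot (X ^ 4 - C (p : ℚ)) →+* ℝ :=
    AdjoinRoot.lift (algebraMap ℚ ℝ) (Real.sqrt (Real.sqrt p)) (by
      simp only [eval₂_sub, eval₂_pow, eval₂_X, eval₂_C]
      rw [show (4 : ℕ) = 2 * 2 by norm_num, pow_mul, Real.sq_sqrt (Real.sqrt_nonneg _),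
        Real.sq_sqrt (Nat.cast_nonneg _)]; simp)
  exact ⟨⟨hp, hmod, θ, hθ, bas, hbas, AlgEquiv.ofBijective s1 hbij, hs1, ρ.comp (e : K →+* _)⟩⟩

/-- For a prime `p ≡ -1 (mod 16)` and `K = ℚ(⁴√p)`, the 2-primary part
of the ideal class group of `K` is cyclic and `4` divides the class number of `K`. -/
theorem pure_quartic_classGroup_cyclic_and_four_dvd
    (p : ℕ) (hp : p.Prime) (hmod : p % 16 = 15)
    (K : Type*) [Field K] [NumberField K]
    (hK : Nonempty (K ≃ₐ[ℚ] AdjoinRoot (X ^ 4 - C (p : ℚ)))) :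
    (∀ P : Sylow 2 (ClassGroup (𝓞 K)), IsCyclic P) ∧ 4 ∣ classNumber K := by
  obtain ⟨e⟩ := hK
  obtain ⟨S⟩ := PQ_exists_setup p hp hmod K e
  exact ⟨S.sylow_cyclic, S.four_dvd⟩
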